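/- arXiv:1603.06069 — 6 statements merged into one kernel-verified Lean document; each statement's English description precedes it below -/
import Mathlib

section
/- Let J₁ be a closed subinterval of (a₁,b₁) and suppose μ₁ is absolutely continuous (with respect to Lebesgue measure) in an open neighborhood of J₁, with density μ₁′ bounded from below there by a positive constant. Then there exists a constant C₁ > 0, independent of j and n, such that λ_{j,2n}^{(1)} ≥ C₁/n whenever 1 ≤ j ≤ n and x_{j,2n} ∈ J₁. -/
open MeasureTheory

/-- The data of the diagonal type II multiple orthogonal polynomial for an
Angelesco system with two intervals: its `2n` zeros, listed in increasing
order, with `n` of them in `(a₁,b₁)` and `n` of them in `(a₂,b₂)`, and the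
multiple orthogonality conditions. -/
structure Angelesco (μ₁ μ₂ : Measure ℝ) (a₁ b₁ a₂ b₂ : ℝ) (n : ℕ) where
  x : Fin (2 * n) → ℝ
  mono : StrictMono x
  mem1 : ∀ i : Fin (2 * n), (i : ℕ) < n → x i ∈ Set.Ioo a₁ b₁
  mem2 : ∀ i : Fin (2 * n), n ≤ (i : ℕ) → x i ∈ Set.Ioo a₂ b₂
  orth1 : ∀ k < n, ∫ t, (∏ i, (t - x i)) * t ^ k ∂μ₁ = 0
  orth2 : ∀ k < n, ∫ t, (∏ i, (t - x i)) * t ^ k ∂μ₂ = 0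

/-- The quadrature weight `λ_{k,2n}^{(μ)} = ∫ ℓ_{k,2n} dμ`, where `ℓ_{k,2n}` is the
`k`-th fundamental Lagrange polynomial for the nodes `x_{1,2n} < ⋯ < x_{2n,2n}`. -/
noncomputable def qweight {μ₁ μ₂ : Measure ℝ} {a₁ b₁ a₂ b₂ : ℝ} {n : ℕ}
    (ad : Angelesco μ₁ μ₂ a₁ b₁ a₂ b₂ n) (μ : Measure ℝ) (k : Fin (2 * n)) : ℝ :=
  ∫ t, (Lagrange.basis Finset.univ ad.x k).eval t ∂μ

/-!
Let `s` be the set of nodes below `b₁`, and let `ℓⱼ` and `ℓⱼˢ` be the fundamental polynomials of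
`xⱼ` for all the nodes and for those in `s`. Orthogonality gives `∫ ℓⱼ dμ₁ = ∫ ℓⱼ ℓⱼˢ dμ₁`, because
`ℓⱼˢ - 1` vanishes at `xⱼ`. Now `Q = ℓⱼ ℓⱼˢ` is the square of `ℓⱼˢ` times a product of linear
factors that are nonnegative to the left of `b₁`, so the integral only decreases when `μ₁` is
replaced by a multiple of Lebesgue measure on `[xⱼ - δ, xⱼ + δ]`.

On that interval, rescaled to `[-1, 1]`, apply Chebyshev–Gauss quadrature with `2k + 1` nodes, where
`k` is proportional to `n`. The point `0` is a node of weight `π / (2k + 1)` and the other terms are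
nonnegative, so `Q(xⱼ) = 1` forces `∫ Q` to be at least a constant over `n`.
-/

section

open Polynomial Finset
open scoped NNReal

section PointEvaluation

variable {k : ℕ} {Q : ℝ[X]}

lemma pi_div_mul_eval_zero_le_integral_measureT (hdeg : Q.natDegree < 2 * (2 * k + 1))
    (hQ : ∀ y ∈ Set.Icc (-1) 1, 0 ≤ Q.eval y) :
    Real.pi / (2 * k + 1) * Q.eval 0 ≤ ∫ y, Q.eval y ∂Chebyshev.measureT := by
  have hquad := Chebyshev.integral_eq_sumZeroes (n := 2 * k + 1) (P := Q) (by lia)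
    (degree_le_natDegree.trans_lt (by exact_mod_cast hdeg))
  have hcos : Real.cos ((2 * k + 1) / (2 * (2 * k + 1)) * Real.pi) = 0 := by
    rw [show (2 * k + 1) / (2 * (2 * k + 1)) * Real.pi = Real.pi / 2 by field_simp,
      Real.cos_pi_div_two]
  rw [hquad, Chebyshev.sumZeroes]
  push_cast
  gcongr
  conv_lhs => rw [← hcos]
  exact single_le_sum
    (f := fun i : ℕ => Q.eval (Real.cos ((2 * i + 1) / (2 * (2 * k + 1)) * Real.pi)))
    (fun i _ => hQ _ (Real.cos_mem_Icc _)) (mem_range.mpr (by lia))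

lemma one_sub_sq_mul_sqrt_inv_le_one (y : ℝ) :
    (1 - y ^ 2) * √(1 - y ^ 2)⁻¹ ≤ 1 := by
  rw [Real.sqrt_inv, ← div_eq_mul_inv, Real.div_sqrt, Real.sqrt_le_one]
  nlinarith

lemma pi_div_mul_eval_zero_le_integral (hdeg : Q.natDegree < 4 * k)
    (hQ : ∀ y ∈ Set.Icc (-1) 1, 0 ≤ Q.eval y) :
    Real.pi / (2 * k + 1) * Q.eval 0 ≤ ∫ y in (-1)..1, Q.eval y := by
  have hdamped : ((1 - X ^ 2) * Q).natDegree < 2 * (2 * k + 1) := by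
    have : (1 - X ^ 2 : ℝ[X]).natDegree ≤ 2 := by compute_degree
    have := natDegree_mul_le (p := 1 - X ^ 2) (q := Q)
    lia
  -- The factor `1 - y ^ 2` compensates for the singular Chebyshev weight `1 / √(1 - y ^ 2)`.
  calc Real.pi / (2 * k + 1) * Q.eval 0
      = Real.pi / (2 * k + 1) * ((1 - X ^ 2) * Q).eval 0 := by simp
    _ ≤ ∫ y, ((1 - X ^ 2) * Q).eval y ∂Chebyshev.measureT := by
        refine pi_div_mul_eval_zero_le_integral_measureT hdamped fun y hy => ?_
        rw [eval_mul]
        refine mul_nonneg ?_ (hQ y hy)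
        simp only [eval_sub, eval_one, eval_pow, eval_X]
        nlinarith [hy.1, hy.2]
    _ = ∫ y in (-1)..1, ((1 - X ^ 2) * Q).eval y * √(1 - y ^ 2)⁻¹ :=
        Chebyshev.integral_measureT _
    _ ≤ ∫ y in (-1)..1, Q.eval y := by
        refine intervalIntegral.integral_mono_on (by norm_num)
          (Chebyshev.intervalIntegrable_sqrt_one_sub_sq_inv.continuousOn_mul (by fun_prop))
          (Q.continuous.intervalIntegrable _ _) fun y hy => ?_
        have := mul_le_of_le_one_left (hQ y hy) (one_sub_sq_mul_sqrt_inv_le_one y)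
        simp only [eval_mul, eval_sub, eval_one, eval_pow, eval_X]
        linarith

lemma div_mul_eval_le_integral {x₀ δ : ℝ} (hδ : 0 < δ) (hdeg : Q.natDegree < 4 * k)
    (hQ : ∀ y ∈ Set.Icc (x₀ - δ) (x₀ + δ), 0 ≤ Q.eval y) :
    δ / k * Q.eval x₀ ≤ ∫ y in (x₀ - δ)..(x₀ + δ), Q.eval y := by
  have hrescaled := pi_div_mul_eval_zero_le_integral (k := k) (Q := Q.comp (C δ * X + C x₀))
    (by rwa [natDegree_comp, natDegree_linear hδ.ne', mul_one])
    fun y hy => by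
      rw [eval_comp]
      apply hQ
      simp only [eval_add, eval_mul, eval_C, eval_X]
      constructor <;> nlinarith [hy.1, hy.2]
  simp only [eval_comp, eval_add, eval_mul, eval_C, eval_X, mul_zero, zero_add,
    intervalIntegral.integral_comp_mul_add (fun y => Q.eval y) hδ.ne', smul_eq_mul,
    show δ * -1 + x₀ = x₀ - δ by ring, show δ * 1 + x₀ = x₀ + δ by ring,
    le_inv_mul_iff₀ hδ] at hrescaled
  have hk : (1 : ℝ) ≤ k := by exact_mod_cast (by lia : 1 ≤ k)
  have hconst : 1 / (k : ℝ) ≤ Real.pi / (2 * k + 1) := by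
    rw [div_le_div_iff₀ (by positivity) (by positivity)]
    nlinarith [Real.pi_gt_three]
  have hQ₀ : 0 ≤ Q.eval x₀ := hQ x₀ ⟨by linarith, by linarith⟩
  calc δ / k * Q.eval x₀ = δ * (1 / k * Q.eval x₀) := by ring
    _ ≤ δ * (Real.pi / (2 * k + 1) * Q.eval x₀) := by gcongr
    _ ≤ ∫ y in (x₀ - δ)..(x₀ + δ), Q.eval y := hrescaled

end PointEvaluation

section LagrangeBasis

variable {ι F : Type*} [DecidableEq ι] {s t : Finset ι} {v : ι → F} {j : ι}

lemma X_sub_C_mul_basis [Field F] (hj : j ∈ t) :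
    (X - C (v j)) * Lagrange.basis t v j =
      C (Lagrange.nodalWeight t v j) * Lagrange.nodal t v := by
  rw [Lagrange.basis_eq_prod_sub_inv_mul_nodal_div hj, ← Lagrange.nodal_erase_eq_nodal_div hj,
    Lagrange.nodal_eq_mul_nodal_erase hj]
  ring

lemma eval_basis_mul_basis_nonneg [Field F] [LinearOrder F] [IsStrictOrderedRing F]
    (hst : s ⊆ t) {y : F} (hj : ∀ i ∈ t, i ∉ s → v j ≤ v i) (hy : ∀ i ∈ t, i ∉ s → y ≤ v i) :
    0 ≤ (Lagrange.basis t v j * Lagrange.basis s v j).eval y := by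
  have hfactor : Lagrange.basis t v j * Lagrange.basis s v j =
      (∏ i ∈ t.erase j \ s.erase j, Lagrange.basisDivisor (v j) (v i)) *
        Lagrange.basis s v j ^ 2 := by
    rw [sq, ← mul_assoc, Lagrange.basis, Lagrange.basis, prod_sdiff (erase_subset_erase j hst)]
  rw [hfactor, eval_mul, eval_pow, eval_prod]
  refine mul_nonneg (prod_nonneg fun i hi => ?_) (sq_nonneg _)
  obtain ⟨hit, his⟩ : i ∈ t ∧ i ∉ s := by grind
  simp only [Lagrange.basisDivisor, eval_mul, eval_C, eval_sub, eval_X]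
  exact mul_nonneg_of_nonpos_of_nonpos (inv_nonpos.mpr (sub_nonpos.mpr (hj i hit his)))
    (sub_nonpos.mpr (hy i hit his))

end LagrangeBasis

section Orthogonality

variable {μ : Measure ℝ}

lemma integrable_eval_of_integrable_pow (hmom : ∀ k : ℕ, Integrable (fun y : ℝ => y ^ k) μ)
    (P : ℝ[X]) : Integrable (fun y => P.eval y) μ := by
  simp_rw [eval_eq_sum_range]
  exact integrable_finsetSum _ fun k _ => (hmom k).const_mul _

lemma integral_eval_mul_eq_zero_of_degree_lt (hmom : ∀ k : ℕ, Integrable (fun y : ℝ => y ^ k) μ)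
    {P V : ℝ[X]} {m : ℕ} (horth : ∀ k < m, ∫ y, P.eval y * y ^ k ∂μ = 0) (hV : V.degree < m) :
    ∫ y, (P * V).eval y ∂μ = 0 := by
  obtain rfl | hV₀ := eq_or_ne V 0
  · simp
  simp_rw [eval_mul, eval_eq_sum_range' ((natDegree_lt_iff_degree_lt hV₀).mpr hV), mul_sum,
    mul_left_comm (P.eval _)]
  rw [integral_finsetSum]
  · exact sum_eq_zero fun k hk => by
      rw [integral_const_mul, horth k (mem_range.mp hk), mul_zero]
  · intro k _
    have := integrable_eval_of_integrable_pow hmom (P * X ^ k)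
    simp only [eval_mul, eval_pow, eval_X] at this
    exact this.const_mul _

lemma integral_eval_basis_mul {ι : Type*} [DecidableEq ι] {t : Finset ι} {v : ι → ℝ} {j : ι}
    (hmom : ∀ k : ℕ, Integrable (fun y : ℝ => y ^ k) μ) {m : ℕ}
    (horth : ∀ k < m, ∫ y, (Lagrange.nodal t v).eval y * y ^ k ∂μ = 0) (hj : j ∈ t)
    {R : ℝ[X]} (hR : R.degree ≤ m) :
    ∫ y, (Lagrange.basis t v j * R).eval y ∂μ =
      R.eval (v j) * ∫ y, (Lagrange.basis t v j).eval y ∂μ := by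
  set V := R /ₘ (X - C (v j))
  have hV : V.degree < m := by
    obtain rfl | hR₀ := eq_or_ne R 0
    · simp [V]
    · exact (degree_divByMonic_lt _ _ hR₀ (by rw [degree_X_sub_C]; exact zero_lt_one)).trans_le hR
  have hsplit : Lagrange.basis t v j * R = C (R.eval (v j)) * Lagrange.basis t v j +
      C (Lagrange.nodalWeight t v j) * (Lagrange.nodal t v * V) := by
    have hdiv : C (R.eval (v j)) + (X - C (v j)) * V = R := by
      rw [← modByMonic_X_sub_C_eq_C_eval, modByMonic_add_div]
    linear_combination V * X_sub_C_mul_basis (v := v) hj - Lagrange.basis t v j * hdiv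
  have hint := integrable_eval_of_integrable_pow hmom
  simp_rw [hsplit, eval_add, eval_C_mul]
  rw [integral_add ((hint _).const_mul _) ((hint _).const_mul _), integral_const_mul,
    integral_const_mul, integral_eval_mul_eq_zero_of_degree_lt hmom horth hV, mul_zero, add_zero]

end Orthogonality

lemma smul_restrict_le_of_restrict_eq_withDensity {α : Type*} [MeasurableSpace α]
    {μ ν : Measure α} {c : ℝ≥0} {U : Set α} (hU : MeasurableSet U) {ρ : α → ENNReal}
    (hρ : μ.restrict U = (ν.restrict U).withDensity ρ) (hcρ : ∀ y ∈ U, c ≤ ρ y) :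
    c • ν.restrict U ≤ μ := calc
  c • ν.restrict U = (ν.restrict U).withDensity fun _ => c := (withDensity_const _).symm
  _ ≤ (ν.restrict U).withDensity ρ :=
    withDensity_mono ((ae_restrict_mem hU).mono hcρ)
  _ = μ.restrict U := hρ.symm
  _ ≤ μ := Measure.restrict_le_self

lemma Angelesco.card_x_lt_le {μ₁ μ₂ : Measure ℝ} {a₁ b₁ a₂ b₂ : ℝ} {n : ℕ}
    (ad : Angelesco μ₁ μ₂ a₁ b₁ a₂ b₂ n) (hgap : b₁ ≤ a₂) : #{i | ad.x i < b₁} ≤ n := calc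
  #{i | ad.x i < b₁} ≤ #{i : Fin (2 * n) | (i : ℕ) < n} := by
    gcongr with i _
    intro hi
    by_contra! hni
    linarith [(ad.mem2 i hni).1]
  _ ≤ n := by simp [Fin.card_filter_val_lt]

section WeightBound

variable {μ : Measure ℝ} {b : ℝ} {c : ℝ≥0}

lemma mul_div_card_le_integral_eval_basis {ι : Type*} [DecidableEq ι] {t : Finset ι} {v : ι → ℝ}
    {j : ι} {δ : ℝ} (hmom : ∀ k : ℕ, Integrable (fun y : ℝ => y ^ k) μ)
    (hsupp : ∀ᵐ y ∂μ, y ≤ b) (hv : Set.InjOn v t)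
    (horth : ∀ k < #{i ∈ t | v i < b}, ∫ y, (Lagrange.nodal t v).eval y * y ^ k ∂μ = 0)
    (hj : j ∈ t) (hδ : 0 < δ) (hjb : v j + δ ≤ b)
    (hμ : c • volume.restrict (Set.Icc (v j - δ) (v j + δ)) ≤ μ) :
    c * δ / #t ≤ ∫ y, (Lagrange.basis t v j).eval y ∂μ := by
  set s := {i ∈ t | v i < b}
  set Q := Lagrange.basis t v j * Lagrange.basis s v j
  have hst : s ⊆ t := filter_subset _ _
  have hjs : j ∈ s := mem_filter.mpr ⟨hj, by linarith⟩
  have hvs : Set.InjOn v s := hv.mono hst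
  have hQ_nonneg : ∀ y ≤ b, 0 ≤ Q.eval y := fun y hy =>
    eval_basis_mul_basis_nonneg hst (by grind) (by grind)
  have hQ_eval : Q.eval (v j) = 1 := by
    rw [eval_mul, Lagrange.eval_basis_self hv hj, Lagrange.eval_basis_self hvs hjs, one_mul]
  have hQ_deg : Q.natDegree < 4 * #t := by
    have := natDegree_mul_le (p := Lagrange.basis t v j) (q := Lagrange.basis s v j)
    rw [Lagrange.natDegree_basis hv hj, Lagrange.natDegree_basis hvs hjs] at this
    have := card_le_card hst
    have := card_pos.mpr ⟨j, hj⟩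
    lia
  have hQ_int : ∫ y, Q.eval y ∂μ = ∫ y, (Lagrange.basis t v j).eval y ∂μ := by
    rw [integral_eval_basis_mul hmom horth hj, Lagrange.eval_basis_self hvs hjs, one_mul]
    rw [Lagrange.degree_basis hvs hjs]
    exact_mod_cast Nat.sub_le _ _
  calc c * δ / #t
      = c * (δ / #t * Q.eval (v j)) := by rw [hQ_eval, mul_one, mul_div_assoc]
    _ ≤ c * ∫ y in (v j - δ)..(v j + δ), Q.eval y := by
        gcongr
        exact div_mul_eval_le_integral hδ hQ_deg fun y hy => hQ_nonneg y (hy.2.trans hjb)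
    _ = ∫ y, Q.eval y ∂(c • volume.restrict (Set.Icc (v j - δ) (v j + δ))) := by
        rw [integral_smul_nnreal_measure, integral_Icc_eq_integral_Ioc,
          intervalIntegral.integral_of_le (by linarith), NNReal.smul_def, smul_eq_mul]
    _ ≤ ∫ y, Q.eval y ∂μ :=
        integral_mono_measure hμ (hsupp.mono hQ_nonneg) (integrable_eval_of_integrable_pow hmom Q)
    _ = ∫ y, (Lagrange.basis t v j).eval y ∂μ := hQ_int

theorem angelesco_weight_lower_bound_C_over_n_general
    (hmom : ∀ k : ℕ, Integrable (fun y : ℝ => y ^ k) μ) (hsupp : ∀ᵐ y ∂μ, y ≤ b)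
    {J U : Set ℝ} (hJ : IsCompact J) (hJb : J ⊆ Set.Iio b) (hU : IsOpen U) (hJU : J ⊆ U)
    (hc : 0 < c) (hμ : c • volume.restrict U ≤ μ) :
    ∃ C₁ > (0 : ℝ), ∀ {ι : Type*} [DecidableEq ι] {t : Finset ι} {v : ι → ℝ}, Set.InjOn v t →
      (∀ k < #{i ∈ t | v i < b}, ∫ y, (Lagrange.nodal t v).eval y * y ^ k ∂μ = 0) →
        ∀ j ∈ t, v j ∈ J → C₁ / #t ≤ ∫ y, (Lagrange.basis t v j).eval y ∂μ := by
  obtain ⟨δ, hδ, hthick⟩ :=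
    hJ.exists_cthickening_subset_open (hU.inter isOpen_Iio) (Set.subset_inter hJU hJb)
  refine ⟨c * δ, by positivity, fun {ι} _ {t v} hv horth j hj hjJ => ?_⟩
  have hIcc : Set.Icc (v j - δ) (v j + δ) ⊆ U ∩ Set.Iio b := by
    rw [← Real.closedBall_eq_Icc]
    exact (Metric.closedBall_subset_cthickening hjJ δ).trans hthick
  refine mul_div_card_le_integral_eval_basis hmom hsupp hv horth hj hδ
    (hIcc (Set.right_mem_Icc.mpr (by linarith))).2.le (le_trans ?_ hμ)
  gcongr
  exact hIcc.trans Set.inter_subset_left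

end WeightBound

end

/-- **Uniform lower bound `λ_{j,2n}^{(1)} ≥ C₁/n` on compact subsets where the density
of `μ₁` is bounded below.**  If `J₁ = [c₀,d₀] ⊆ (a₁,b₁)` and `μ₁` is absolutely
continuous in an open neighborhood of `J₁` with density bounded below by a positive
constant there, then there is `C₁ > 0`, independent of `j` and `n`, with
`λ_{j,2n}^{(1)} ≥ C₁/n` whenever `x_{j,2n} ∈ J₁`. -/
theorem angelesco_weight_lower_bound_C_over_n
    (μ₁ μ₂ : Measure ℝ) [IsFiniteMeasure μ₁] [IsFiniteMeasure μ₂]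
    (a₁ b₁ a₂ b₂ : ℝ) (hab₁ : a₁ < b₁) (hgap : b₁ ≤ a₂) (hab₂ : a₂ < b₂)
    (hsupp₁ : μ₁ (Set.Icc a₁ b₁)ᶜ = 0) (hsupp₂ : μ₂ (Set.Icc a₂ b₂)ᶜ = 0)
    (hinf₁ : ∀ s : Finset ℝ, μ₁ ((s : Set ℝ))ᶜ ≠ 0)
    (hinf₂ : ∀ s : Finset ℝ, μ₂ ((s : Set ℝ))ᶜ ≠ 0)
    (hmom₁ : ∀ k : ℕ, Integrable (fun t : ℝ => t ^ k) μ₁)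
    (hmom₂ : ∀ k : ℕ, Integrable (fun t : ℝ => t ^ k) μ₂)
    (c₀ d₀ : ℝ) (hc₀d₀ : c₀ ≤ d₀) (hJ : Set.Icc c₀ d₀ ⊆ Set.Ioo a₁ b₁)
    (hac : ∃ U : Set ℝ, IsOpen U ∧ Set.Icc c₀ d₀ ⊆ U ∧
      ∃ ρ : ℝ → ENNReal, μ₁.restrict U = (volume.restrict U).withDensity ρ ∧
        ∃ κ : ℝ, 0 < κ ∧ ∀ t ∈ U, ENNReal.ofReal κ ≤ ρ t) :
    ∃ C₁ > (0 : ℝ), ∀ n : ℕ, 1 ≤ n → ∀ ad : Angelesco μ₁ μ₂ a₁ b₁ a₂ b₂ n,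
      ∀ j : Fin (2 * n), (j : ℕ) < n → ad.x j ∈ Set.Icc c₀ d₀ →
        C₁ / n ≤ qweight ad μ₁ j := by
  obtain ⟨U, hU, hJU, ρ, hρ, κ, hκ, hκρ⟩ := hac
  obtain ⟨C, hC, hbound⟩ := angelesco_weight_lower_bound_C_over_n_general hmom₁
    (Filter.Eventually.mono (show ∀ᵐ y ∂μ₁, y ∈ Set.Icc a₁ b₁ from hsupp₁) fun _ hy => hy.2)
    isCompact_Icc (hJ.trans Set.Ioo_subset_Iio_self) hU hJU (Real.toNNReal_pos.mpr hκ)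
    (smul_restrict_le_of_restrict_eq_withDensity hU.measurableSet hρ hκρ)
  refine ⟨C / 2, half_pos hC, fun n _ ad j _ hjJ => ?_⟩
  have horth : ∀ k < Finset.card {i | ad.x i < b₁},
      ∫ y, (Lagrange.nodal Finset.univ ad.x).eval y * y ^ k ∂μ₁ = 0 := fun k hk => by
    simpa only [Lagrange.eval_nodal] using ad.orth1 k (hk.trans_le (ad.card_x_lt_le hgap))
  simpa [qweight, div_div] using
    hbound ad.mono.injective.injOn horth j (Finset.mem_univ j) hjJ
end

section
/- Let J₁ be a closed subinterval of (a₁,b₁) and suppose μ₁ is absolutely continuous in an open neighborhood of J₁ with density μ₁′ satisfying 0 < c ≤ μ₁′ ≤ M there. Then there exists a constant C > 0, independent of n, such that for all n ≥ 3 and all 2 ≤ j ≤ n − 1 with x_{j−1,2n}, x_{j+1,2n} ∈ J₁, one has x_{j+1,2n} − x_{j−1,2n} ≥ C/n. -/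
open MeasureTheory

/-!
Fix two nodes `A ≠ B` among the first `n`. Dropping them from `pₙ` leaves a polynomial `Q` of degree
`n - 2`, and orthogonality of `P_{n,n}` to `Q` says `∫ (t - A) (t - B) S dμ₁ = 0` with
`S = Q² qₙ ≥ 0` on `[a₁, b₁]`.

With `h = |B - A|`, the factor `(t - A) (t - B)` is at least `h²` outside `W = [A - 2h, A + 2h]` and
at least `-h²` inside, so `∫ S dμ₁ ≤ 2 (max_W S) μ₁(W) = O(h) max_W S`. Conversely, a nonnegative
polynomial of degree `O(n)` satisfies the Nikolskii-type bound `S(ξ) = O(n) ∫ S` over any interval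
of fixed length centred at `ξ`; applied at the maximum point this gives `max_W S = O(n) ∫ S dμ₁`.
Hence `h ≥ C / n`. The Nikolskii bound is Gauss–Chebyshev quadrature with an odd number of nodes,
one of which is the centre: all other terms of the quadrature sum are nonnegative.
-/

section

open Polynomial Real

section Nikolskii

open Polynomial.Chebyshev in
lemma pi_mul_eval_zero_le_integral_measureT {q : ℝ[X]} {m : ℕ}
    (hdeg : q.degree < 2 * (2 * m + 1 : ℕ)) (hq : ∀ t ∈ Set.Icc (-1) 1, 0 ≤ q.eval t) :
    π * q.eval 0 ≤ (2 * m + 1) * ∫ t, q.eval t ∂measureT := by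
  set node : ℕ → ℝ := fun k => cos ((2 * k + 1) / (2 * (2 * m + 1 : ℕ)) * π)
  have node_eq_zero : node m = 0 := by
    have : (2 * m + 1) / (2 * (2 * m + 1 : ℕ)) * π = π / 2 := by push_cast; field
    simp only [node, this, cos_pi_div_two]
  have eval_zero_le_sum : q.eval 0 ≤ ∑ k ∈ Finset.range (2 * m + 1), q.eval (node k) :=
    node_eq_zero ▸ Finset.single_le_sum (f := fun k => q.eval (node k))
      (fun _ _ => hq _ (cos_mem_Icc _)) (Finset.mem_range.2 (by omega))
  calc π * q.eval 0 ≤ π * ∑ k ∈ Finset.range (2 * m + 1), q.eval (node k) := by gcongr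
    _ = (2 * m + 1) * ∫ t, q.eval t ∂measureT := by
      rw [integral_eq_sumZeroes (by omega) hdeg, sumZeroes, ← mul_assoc]
      congr 1
      push_cast
      field

open Polynomial.Chebyshev in
lemma integral_one_sub_sq_mul_measureT_le {f : ℝ → ℝ} (hf : Continuous f)
    (hpos : ∀ t ∈ Set.Icc (-1) 1, 0 ≤ f t) :
    ∫ t, (1 - t ^ 2) * f t ∂measureT ≤ ∫ t in (-1)..1, f t := by
  have weight_eq (t : ℝ) : (1 - t ^ 2) * f t * √(1 - t ^ 2)⁻¹ = f t * √(1 - t ^ 2) := by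
    rw [sqrt_inv, mul_comm (1 - t ^ 2), mul_assoc, ← div_eq_mul_inv, div_sqrt]
  simp_rw [integral_measureT, weight_eq]
  refine intervalIntegral.integral_mono_on (by norm_num)
    (by apply Continuous.intervalIntegrable; fun_prop) (hf.intervalIntegrable _ _) fun t ht => ?_
  exact mul_le_of_le_one_right (hpos t ht) (sqrt_le_one.2 (by nlinarith [sq_nonneg t]))

lemma eval_zero_le_mul_integral {p : ℝ[X]} {m : ℕ} (hdeg : p.natDegree < 4 * m)
    (hp : ∀ t ∈ Set.Icc (-1) 1, 0 ≤ p.eval t) :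
    p.eval 0 ≤ m * ∫ t in (-1)..1, p.eval t := by
  have hm : (1 : ℝ) ≤ m := by exact_mod_cast (by omega : 1 ≤ m)
  have integral_nonneg : 0 ≤ ∫ t in (-1)..1, p.eval t :=
    intervalIntegral.integral_nonneg (by norm_num) hp
  -- The factor `1 - X ^ 2` tames the singular weight without changing the value at `0`.
  have quadrature := pi_mul_eval_zero_le_integral_measureT (q := (1 - X ^ 2) * p) (m := m)
    (by
      refine degree_le_natDegree.trans_lt ?_
      have : ((1 - X ^ 2) * p).natDegree ≤ 2 + p.natDegree :=
        natDegree_mul_le_of_le (by compute_degree) le_rfl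
      exact_mod_cast (by omega : ((1 - X ^ 2) * p).natDegree < 2 * (2 * m + 1)))
    (fun t ht => by
      have : 0 ≤ 1 - t ^ 2 := by nlinarith [ht.1, ht.2]
      simpa using mul_nonneg this (hp t ht))
  have weighted_le := integral_one_sub_sq_mul_measureT_le p.continuous hp
  simp only [eval_mul, eval_sub, eval_one, eval_pow, eval_X] at quadrature
  refine le_of_mul_le_mul_left ?_ pi_pos
  calc π * p.eval 0 ≤ (2 * m + 1) * ∫ t in (-1)..1, p.eval t := by
        refine le_trans (by simpa using quadrature) ?_
        gcongr
    _ ≤ (π * m) * ∫ t in (-1)..1, p.eval t := by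
        gcongr
        nlinarith [pi_gt_three]
    _ = π * (m * ∫ t in (-1)..1, p.eval t) := mul_assoc _ _ _

lemma mul_eval_le_mul_setIntegral_closedBall {p : ℝ[X]} {m : ℕ} (hdeg : p.natDegree < 4 * m)
    {ξ δ : ℝ} (hδ : 0 < δ) (hp : ∀ t ∈ Metric.closedBall ξ δ, 0 ≤ p.eval t) :
    δ * p.eval ξ ≤ m * ∫ t in Metric.closedBall ξ δ, p.eval t := by
  set q : ℝ[X] := p.comp (C δ * X + C ξ)
  have eval_q (t : ℝ) : q.eval t = p.eval (δ * t + ξ) := by simp [q]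
  have hq : q.natDegree < 4 * m := by
    rwa [natDegree_comp, natDegree_linear hδ.ne', mul_one]
  have integral_q : δ * ∫ t in (-1)..1, q.eval t = ∫ t in Metric.closedBall ξ δ, p.eval t := by
    simp_rw [eval_q]
    rw [intervalIntegral.mul_integral_comp_mul_add (f := fun t => p.eval t),
      closedBall_eq_Icc, integral_Icc_eq_integral_Ioc,
      ← intervalIntegral.integral_of_le (by linarith)]
    congr 1 <;> ring
  have bound := eval_zero_le_mul_integral hq fun t ht => by
    refine eval_q t ▸ hp _ ?_
    rw [mem_closedBall_iff_norm, add_sub_cancel_right, norm_eq_abs, abs_mul, abs_of_pos hδ]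
    exact mul_le_of_le_one_right hδ.le (abs_le.2 ht)
  calc δ * p.eval ξ = δ * q.eval 0 := by simp [eval_q]
    _ ≤ δ * (m * ∫ t in (-1)..1, q.eval t) := by gcongr
    _ = m * ∫ t in Metric.closedBall ξ δ, p.eval t := by rw [← integral_q]; ring

end Nikolskii

section Measure

variable {α : Type*} [MeasurableSpace α]

lemma integrable_of_continuous_of_compl_null [TopologicalSpace α] [OpensMeasurableSpace α]
    [T2Space α] {E : Type*} [NormedAddCommGroup E] {μ : Measure α} [IsFiniteMeasureOnCompacts μ]
    {K : Set α} (hK : IsCompact K) (hsupp : μ Kᶜ = 0) {f : α → E} (hf : Continuous f) :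
    Integrable f μ := by
  rw [← Measure.restrict_eq_self_of_ae_mem (μ := μ) (s := K) hsupp]
  exact hf.continuousOn.integrableOn_compact hK

lemma integral_mul_eval_eq_zero {μ : Measure ℝ} {f : ℝ → ℝ} {n : ℕ}
    (hint : ∀ k < n, Integrable (fun t => f t * t ^ k) μ)
    (horth : ∀ k < n, ∫ t, f t * t ^ k ∂μ = 0) {q : ℝ[X]} (hq : q.natDegree < n) :
    ∫ t, f t * q.eval t ∂μ = 0 := by
  simp_rw [eval_eq_sum_range' hq, Finset.mul_sum, mul_left_comm (f _)]
  rw [integral_finsetSum _ fun k hk => (hint k (Finset.mem_range.1 hk)).const_mul _]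
  refine Finset.sum_eq_zero fun k hk => ?_
  rw [integral_const_mul, horth k (Finset.mem_range.1 hk), mul_zero]

lemma smul_restrict_le_of_le_density {μ ν : Measure α} {U : Set α} (hU : MeasurableSet U)
    {ρ : α → ENNReal} (hρ : μ.restrict U = (ν.restrict U).withDensity ρ) {c : ENNReal}
    (hc : ∀ t ∈ U, c ≤ ρ t) : c • ν.restrict U ≤ μ := by
  refine le_trans ?_ (Measure.restrict_le_self (s := U))
  rw [hρ, ← withDensity_const]
  exact withDensity_mono (ae_restrict_of_forall_mem hU hc)

lemma restrict_le_smul_of_density_le {μ ν : Measure α} {U : Set α} (hU : MeasurableSet U)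
    {ρ : α → ENNReal} (hρ : μ.restrict U = (ν.restrict U).withDensity ρ) {M : ENNReal}
    (hM : ∀ t ∈ U, ρ t ≤ M) : μ.restrict U ≤ M • ν := by
  rw [hρ]
  refine (withDensity_mono (ae_restrict_of_forall_mem hU hM)).trans ?_
  rw [withDensity_const]
  gcongr
  exact Measure.restrict_le_self

lemma mul_setIntegral_le_integral {μ ν : Measure α} {s : Set α} {c : ℝ} (hc : 0 ≤ c)
    (hle : ENNReal.ofReal c • ν.restrict s ≤ μ) {f : α → ℝ} (hpos : ∀ᵐ t ∂μ, 0 ≤ f t)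
    (hf : Integrable f μ) : c * ∫ t in s, f t ∂ν ≤ ∫ t, f t ∂μ := by
  rw [← smul_eq_mul, ← ENNReal.toReal_ofReal hc, ← integral_smul_measure]
  exact integral_mono_measure hle hpos hf

lemma measureReal_closedBall_le {μ : Measure ℝ} {A r M : ℝ} (hr : 0 ≤ r) (hM : 0 ≤ M)
    (hle : μ.restrict (Metric.closedBall A r) ≤ ENNReal.ofReal M • volume) :
    μ.real (Metric.closedBall A r) ≤ M * (2 * r) := by
  refine ENNReal.toReal_le_of_le_ofReal (by positivity) ?_
  simpa [ENNReal.ofReal_mul hM] using hle (Metric.closedBall A r)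

end Measure

section QuadraticFactor

lemma sq_le_sub_mul_sub_of_notMem_closedBall {A B t : ℝ}
    (ht : t ∉ Metric.closedBall A (2 * |B - A|)) : (B - A) ^ 2 ≤ (t - A) * (t - B) := by
  rw [mem_closedBall_iff_norm, norm_eq_abs, not_le] at ht
  nlinarith [sq_abs (t - A), sq_abs (B - A), abs_nonneg (B - A), abs_mul (t - A) (B - A),
    le_abs_self ((t - A) * (B - A))]

lemma neg_sq_le_sub_mul_sub (A B t : ℝ) : -(B - A) ^ 2 ≤ (t - A) * (t - B) := by
  nlinarith [sq_nonneg (2 * t - A - B), sq_nonneg (B - A)]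

lemma integral_le_of_integral_sub_mul_sub_mul_nonpos {μ : Measure ℝ} [IsFiniteMeasure μ]
    {f : ℝ → ℝ} {A B L : ℝ} (hAB : A ≠ B) (hf : Integrable f μ)
    (hqf : Integrable (fun t => (t - A) * (t - B) * f t) μ) (hpos : ∀ᵐ t ∂μ, 0 ≤ f t)
    (hL : ∀ t ∈ Metric.closedBall A (2 * |B - A|), f t ≤ L)
    (horth : ∫ t, (t - A) * (t - B) * f t ∂μ ≤ 0) :
    ∫ t, f t ∂μ ≤ 2 * L * μ.real (Metric.closedBall A (2 * |B - A|)) := by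
  set W := Metric.closedBall A (2 * |B - A|)
  have hW : MeasurableSet W := measurableSet_closedBall
  have h_sq : 0 < (B - A) ^ 2 := sq_pos_of_ne_zero (sub_ne_zero.2 hAB.symm)
  have integrable_window : Integrable (W.indicator fun _ => 2 * (B - A) ^ 2 * L) μ :=
    (integrable_const _).indicator hW
  have pointwise : ∀ᵐ t ∂μ, (B - A) ^ 2 * f t ≤
      (t - A) * (t - B) * f t + W.indicator (fun _ => 2 * (B - A) ^ 2 * L) t := by
    filter_upwards [hpos] with t ht
    by_cases htW : t ∈ W
    · rw [Set.indicator_of_mem htW]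
      nlinarith [mul_le_mul_of_nonneg_right (neg_sq_le_sub_mul_sub A B t) ht,
        mul_le_mul_of_nonneg_left (hL t htW) h_sq.le]
    · rw [Set.indicator_of_notMem htW, add_zero]
      exact mul_le_mul_of_nonneg_right (sq_le_sub_mul_sub_of_notMem_closedBall htW) ht
  refine le_of_mul_le_mul_left ?_ h_sq
  calc (B - A) ^ 2 * ∫ t, f t ∂μ = ∫ t, (B - A) ^ 2 * f t ∂μ := (integral_const_mul _ _).symm
    _ ≤ ∫ t, ((t - A) * (t - B) * f t + W.indicator (fun _ => 2 * (B - A) ^ 2 * L) t) ∂μ :=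
      integral_mono_ae (hf.const_mul _) (hqf.add integrable_window) pointwise
    _ = (∫ t, (t - A) * (t - B) * f t ∂μ) + μ.real W * (2 * (B - A) ^ 2 * L) := by
      rw [integral_add hqf integrable_window, integral_indicator hW, setIntegral_const,
        smul_eq_mul]
    _ ≤ (B - A) ^ 2 * (2 * L * μ.real W) := by linarith

end QuadraticFactor

lemma exists_isMaxOn_closedBall_eval_pos {p : ℝ[X]} (hp : p ≠ 0) {A r : ℝ} (hr : 0 < r)
    (hpos : ∀ t ∈ Metric.closedBall A r, 0 ≤ p.eval t) :
    ∃ ξ ∈ Metric.closedBall A r, 0 < p.eval ξ ∧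
      IsMaxOn (fun t => p.eval t) (Metric.closedBall A r) ξ := by
  obtain ⟨ξ, hξ, hmax⟩ := (isCompact_closedBall A r).exists_isMaxOn
    (Metric.nonempty_closedBall.2 hr.le) p.continuousOn
  refine ⟨ξ, hξ, (hpos ξ hξ).lt_of_ne fun eval_ξ => hp ?_, hmax⟩
  have infinite_ball : (Metric.closedBall A r).Infinite := by
    rw [closedBall_eq_Icc]
    exact Set.Icc_infinite (by linarith)
  exact eq_zero_of_infinite_isRoot p
    (infinite_ball.mono fun t ht => le_antisymm (eval_ξ ▸ hmax ht) (hpos t ht))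

theorem mul_le_of_integral_sub_mul_sub_mul_eval_nonpos {μ : Measure ℝ} [IsFiniteMeasure μ]
    {K : Set ℝ} (hK : IsCompact K) (hsupp : μ Kᶜ = 0) {A B δ c M : ℝ} (hAB : A ≠ B)
    (hABδ : |B - A| ≤ δ) (hball : Metric.closedBall A (3 * δ) ⊆ K) (hc : 0 ≤ c) (hM : 0 ≤ M)
    (hlo : ENNReal.ofReal c • volume.restrict (Metric.closedBall A (3 * δ)) ≤ μ)
    (hhi : μ.restrict (Metric.closedBall A (3 * δ)) ≤ ENNReal.ofReal M • volume)
    {p : ℝ[X]} (hp : p ≠ 0) {m : ℕ} (hdeg : p.natDegree < 4 * m)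
    (hpos : ∀ t ∈ K, 0 ≤ p.eval t) (horth : ∫ t, (t - A) * (t - B) * p.eval t ∂μ ≤ 0) :
    c * δ ≤ 8 * M * m * |B - A| := by
  have habs : 0 < |B - A| := abs_pos.2 (sub_ne_zero.2 hAB.symm)
  have hδ : 0 < δ := habs.trans_le hABδ
  set W := Metric.closedBall A (2 * |B - A|)
  have hWball : W ⊆ Metric.closedBall A (3 * δ) := Metric.closedBall_subset_closedBall (by linarith)
  obtain ⟨ξ, hξ, pos_ξ, max_ξ⟩ := exists_isMaxOn_closedBall_eval_pos hp (by positivity)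
    fun t ht => hpos t (hball (hWball ht))
  have hIball : Metric.closedBall ξ δ ⊆ Metric.closedBall A (3 * δ) :=
    Metric.closedBall_subset_closedBall' (by linarith [Metric.mem_closedBall.1 hξ])
  have hposμ : ∀ᵐ t ∂μ, 0 ≤ p.eval t :=
    (show ∀ᵐ t ∂μ, t ∈ K from hsupp).mono hpos
  have integrable_p := integrable_of_continuous_of_compl_null hK hsupp p.continuous
  have lower : c * ∫ t in Metric.closedBall ξ δ, p.eval t ≤ ∫ t, p.eval t ∂μ := by
    refine mul_setIntegral_le_integral hc (le_trans ?_ hlo) hposμ integrable_p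
    gcongr
  have upper : ∫ t, p.eval t ∂μ ≤ 2 * p.eval ξ * μ.real W :=
    integral_le_of_integral_sub_mul_sub_mul_nonpos hAB integrable_p
      (integrable_of_continuous_of_compl_null hK hsupp (by fun_prop)) hposμ
      (fun _ ht => max_ξ ht) horth
  have measure_W : μ.real W ≤ M * (2 * (2 * |B - A|)) :=
    measureReal_closedBall_le (by positivity) hM ((Measure.restrict_mono_set μ hWball).trans hhi)
  have nikolskii : δ * p.eval ξ ≤ m * ∫ t in Metric.closedBall ξ δ, p.eval t :=
    mul_eval_le_mul_setIntegral_closedBall hdeg hδ fun t ht => hpos t (hball (hIball ht))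
  refine le_of_mul_le_mul_right ?_ pos_ξ
  calc c * δ * p.eval ξ = c * (δ * p.eval ξ) := mul_assoc _ _ _
    _ ≤ c * (m * ∫ t in Metric.closedBall ξ δ, p.eval t) :=
      mul_le_mul_of_nonneg_left nikolskii hc
    _ = m * (c * ∫ t in Metric.closedBall ξ δ, p.eval t) := mul_left_comm _ _ _
    _ ≤ m * (2 * p.eval ξ * μ.real W) :=
      mul_le_mul_of_nonneg_left (lower.trans upper) m.cast_nonneg
    _ ≤ m * (2 * p.eval ξ * (M * (2 * (2 * |B - A|)))) := by gcongr
    _ = 8 * M * m * |B - A| * p.eval ξ := by ring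

namespace Angelesco

variable {μ₁ μ₂ : Measure ℝ} {a₁ b₁ a₂ b₂ : ℝ} {n : ℕ}

/-- The indices of the zeros in `(a₁, b₁)`. -/
def lowerIndices (n : ℕ) : Finset (Fin (2 * n)) := {k | (k : ℕ) < n}

/-- The polynomial `pₙ` (the zeros in `(a₁, b₁)`) with the zeros `xᵢ` and `xⱼ` divided out. -/
noncomputable def lowerPolyErase (ad : Angelesco μ₁ μ₂ a₁ b₁ a₂ b₂ n) (i j : Fin (2 * n)) : ℝ[X] :=
  ∏ k ∈ ((lowerIndices n).erase i).erase j, (X - C (ad.x k))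

/-- The polynomial `qₙ` whose zeros are those in `(a₂, b₂)`, with the sign that makes it positive
on `[a₁, b₁]`. -/
noncomputable def upperPoly (ad : Angelesco μ₁ μ₂ a₁ b₁ a₂ b₂ n) : ℝ[X] :=
  ∏ k ∈ (lowerIndices n)ᶜ, (C (ad.x k) - X)

variable (ad : Angelesco μ₁ μ₂ a₁ b₁ a₂ b₂ n)

lemma mem_lowerIndices {k : Fin (2 * n)} : k ∈ lowerIndices n ↔ (k : ℕ) < n := by
  simp [lowerIndices]

lemma card_lowerIndices (n : ℕ) : (lowerIndices n).card = n := by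
  rw [lowerIndices, Fin.card_filter_val_lt]
  omega

lemma card_compl_lowerIndices (n : ℕ) : (lowerIndices n)ᶜ.card = n := by
  rw [Finset.card_compl, card_lowerIndices, Fintype.card_fin]
  omega

lemma lowerPolyErase_ne_zero (i j : Fin (2 * n)) : ad.lowerPolyErase i j ≠ 0 :=
  Finset.prod_ne_zero_iff.2 fun _ _ => X_sub_C_ne_zero _

lemma natDegree_lowerPolyErase_lt {i : Fin (2 * n)} (hi : (i : ℕ) < n) (j : Fin (2 * n)) :
    (ad.lowerPolyErase i j).natDegree < n := by
  rw [lowerPolyErase, natDegree_finsetProd_X_sub_C_eq_card]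
  calc _ ≤ ((lowerIndices n).erase i).card := Finset.card_erase_le
    _ < (lowerIndices n).card := Finset.card_erase_lt_of_mem (mem_lowerIndices.2 hi)
    _ = n := card_lowerIndices n

lemma natDegree_upperPoly_le : ad.upperPoly.natDegree ≤ n := by
  calc ad.upperPoly.natDegree
      ≤ ∑ k ∈ (lowerIndices n)ᶜ, (C (ad.x k) - X : ℝ[X]).natDegree := natDegree_prod_le _ _
    _ ≤ ∑ _k ∈ (lowerIndices n)ᶜ, 1 := Finset.sum_le_sum fun _ _ => by compute_degree
    _ = n := by rw [← Finset.card_eq_sum_ones, card_compl_lowerIndices]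

lemma upperPoly_eval_pos (hgap : b₁ ≤ a₂) {t : ℝ} (ht : t ≤ b₁) : 0 < ad.upperPoly.eval t := by
  rw [upperPoly, eval_prod]
  refine Finset.prod_pos fun k hk => ?_
  have := (ad.mem2 k (by simpa [mem_lowerIndices] using hk)).1
  simp only [eval_sub, eval_C, eval_X]
  linarith

lemma prod_sub_eq {i j : Fin (2 * n)} (hi : (i : ℕ) < n) (hj : (j : ℕ) < n) (hij : i ≠ j) (t : ℝ) :
    ∏ k, (t - ad.x k) = (-1) ^ n *
      ((t - ad.x i) * (t - ad.x j) * (ad.lowerPolyErase i j).eval t * ad.upperPoly.eval t) := by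
  have hj' : j ∈ (lowerIndices n).erase i := Finset.mem_erase.2 ⟨hij.symm, mem_lowerIndices.2 hj⟩
  have lower : ∏ k ∈ lowerIndices n, (t - ad.x k)
      = (t - ad.x i) * ((t - ad.x j) * (ad.lowerPolyErase i j).eval t) := by
    rw [← Finset.mul_prod_erase _ _ (mem_lowerIndices.2 hi), ← Finset.mul_prod_erase _ _ hj',
      lowerPolyErase, eval_prod]
    simp only [eval_sub, eval_X, eval_C]
  have upper : ∏ k ∈ (lowerIndices n)ᶜ, (t - ad.x k) = (-1) ^ n * ad.upperPoly.eval t := by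
    have neg := Finset.prod_neg (s := (lowerIndices n)ᶜ) (f := fun k => ad.x k - t)
    rw [card_compl_lowerIndices] at neg
    simpa only [upperPoly, eval_prod, eval_sub, eval_C, eval_X, neg_sub] using neg
  rw [← Finset.prod_mul_prod_compl (lowerIndices n), lower, upper]
  ring

lemma integral_sub_mul_sub_mul_eval_eq_zero [IsFiniteMeasure μ₁]
    (hsupp : μ₁ (Set.Icc a₁ b₁)ᶜ = 0) {i j : Fin (2 * n)} (hi : (i : ℕ) < n) (hj : (j : ℕ) < n)
    (hij : i ≠ j) :
    ∫ t, (t - ad.x i) * (t - ad.x j) *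
      (ad.lowerPolyErase i j ^ 2 * ad.upperPoly).eval t ∂μ₁ = 0 := by
  have orth := integral_mul_eval_eq_zero (fun k _ =>
    integrable_of_continuous_of_compl_null isCompact_Icc hsupp (by fun_prop))
    ad.orth1 (ad.natDegree_lowerPolyErase_lt hi j)
  have integrand_eq (t : ℝ) : (∏ k, (t - ad.x k)) * (ad.lowerPolyErase i j).eval t = (-1) ^ n *
      ((t - ad.x i) * (t - ad.x j) * (ad.lowerPolyErase i j ^ 2 * ad.upperPoly).eval t) := by
    rw [ad.prod_sub_eq hi hj hij, eval_mul, eval_pow]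
    ring
  simp_rw [integrand_eq, integral_const_mul] at orth
  exact (mul_eq_zero.1 orth).resolve_left (by simp)

lemma mul_le_mul_abs_sub [IsFiniteMeasure μ₁] (hgap : b₁ ≤ a₂) (hsupp : μ₁ (Set.Icc a₁ b₁)ᶜ = 0)
    {i j : Fin (2 * n)} (hi : (i : ℕ) < n) (hj : (j : ℕ) < n) (hij : i ≠ j) {δ c M : ℝ}
    (hδ : |ad.x j - ad.x i| ≤ δ)
    (hball : Metric.closedBall (ad.x i) (3 * δ) ⊆ Set.Icc a₁ b₁) (hc : 0 ≤ c) (hM : 0 ≤ M)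
    (hlo : ENNReal.ofReal c • volume.restrict (Metric.closedBall (ad.x i) (3 * δ)) ≤ μ₁)
    (hhi : μ₁.restrict (Metric.closedBall (ad.x i) (3 * δ)) ≤ ENNReal.ofReal M • volume) :
    c * δ ≤ 8 * M * n * |ad.x j - ad.x i| := by
  have upperPoly_pos {t : ℝ} (ht : t ∈ Set.Icc a₁ b₁) : 0 < ad.upperPoly.eval t :=
    ad.upperPoly_eval_pos hgap ht.2
  have upperPoly_ne_zero : ad.upperPoly ≠ 0 := fun h => by
    simpa [h] using upperPoly_pos (Set.Ioo_subset_Icc_self (ad.mem1 i hi))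
  have natDegree_lt : (ad.lowerPolyErase i j ^ 2 * ad.upperPoly).natDegree < 4 * n := by
    have lower := ad.natDegree_lowerPolyErase_lt hi j
    have upper := ad.natDegree_upperPoly_le
    refine natDegree_mul_le.trans_lt ?_
    rw [natDegree_pow]
    omega
  refine mul_le_of_integral_sub_mul_sub_mul_eval_nonpos isCompact_Icc hsupp
    (ad.mono.injective.ne hij) hδ hball hc hM hlo hhi
    (mul_ne_zero (pow_ne_zero 2 (ad.lowerPolyErase_ne_zero i j)) upperPoly_ne_zero) natDegree_lt
    (fun t ht => ?_) (ad.integral_sub_mul_sub_mul_eval_eq_zero hsupp hi hj hij).le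
  rw [eval_mul, eval_pow]
  exact mul_nonneg (sq_nonneg _) (upperPoly_pos ht).le

end Angelesco

theorem angelesco_node_spacing_lower_bound_general {μ₁ μ₂ : Measure ℝ} [IsFiniteMeasure μ₁]
    {a₁ b₁ a₂ b₂ : ℝ} (hgap : b₁ ≤ a₂) (hsupp : μ₁ (Set.Icc a₁ b₁)ᶜ = 0)
    {K U : Set ℝ} (hK : IsCompact K) (hKab : K ⊆ Set.Ioo a₁ b₁) (hU : IsOpen U) (hKU : K ⊆ U)
    {ρ : ℝ → ENNReal} (hρ : μ₁.restrict U = (volume.restrict U).withDensity ρ) {c M : ℝ}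
    (hc : 0 < c) (hρ_bounds : ∀ t ∈ U, ENNReal.ofReal c ≤ ρ t ∧ ρ t ≤ ENNReal.ofReal M) :
    ∃ C > (0 : ℝ), ∀ (n : ℕ) (ad : Angelesco μ₁ μ₂ a₁ b₁ a₂ b₂ n) (i j : Fin (2 * n)),
      (i : ℕ) < n → (j : ℕ) < n → i ≠ j → ad.x i ∈ K → C / n ≤ |ad.x j - ad.x i| := by
  rcases K.eq_empty_or_nonempty with rfl | ⟨t₀, ht₀⟩
  · exact ⟨1, one_pos, by simp⟩
  have hM : 0 < M := by
    have := (hρ_bounds t₀ (hKU ht₀)).1.trans (hρ_bounds t₀ (hKU ht₀)).2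
    exact ENNReal.ofReal_pos.1 ((ENNReal.ofReal_pos.2 hc).trans_le this)
  obtain ⟨δ, hδ, hball⟩ :
      ∃ δ > 0, ∀ A ∈ K, Metric.closedBall A (3 * δ) ⊆ U ∩ Set.Ioo a₁ b₁ := by
    obtain ⟨ε, hε, hεU⟩ := hK.exists_cthickening_subset_open (hU.inter isOpen_Ioo)
      (Set.subset_inter hKU hKab)
    refine ⟨ε / 3, by positivity, fun A hA => ?_⟩
    rw [mul_div_cancel₀ ε three_ne_zero]
    exact (Metric.closedBall_subset_cthickening hA ε).trans hεU
  refine ⟨min δ (c * δ / (8 * M)), by positivity, fun n ad i j hi hj hij hiK => ?_⟩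
  have hn : (1 : ℝ) ≤ n := by exact_mod_cast (by omega : 1 ≤ n)
  rw [div_le_iff₀ (by positivity)]
  rcases le_total δ |ad.x j - ad.x i| with far | near
  · exact (min_le_left _ _).trans (far.trans (le_mul_of_one_le_right (abs_nonneg _) hn))
  · have hballU := (hball _ hiK).trans Set.inter_subset_left
    have hballab := (hball _ hiK).trans (Set.inter_subset_right.trans Set.Ioo_subset_Icc_self)
    have hlo := smul_restrict_le_of_le_density hU.measurableSet hρ fun t ht => (hρ_bounds t ht).1
    have hhi := restrict_le_smul_of_density_le hU.measurableSet hρ fun t ht => (hρ_bounds t ht).2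
    have spacing := ad.mul_le_mul_abs_sub hgap hsupp hi hj hij near hballab hc.le hM.le
      (le_trans (by gcongr) hlo) ((Measure.restrict_mono_set μ₁ hballU).trans hhi)
    refine (min_le_right _ _).trans ((div_le_iff₀ (by positivity)).2 ?_)
    linarith

end

/-- **Lower bound on the spacing of the nodes:** if `μ₁` is absolutely continuous near
`J₁ = [c₀,d₀] ⊆ (a₁,b₁)` with density `0 < c ≤ μ₁′ ≤ M` there, then there is `C > 0`,
independent of `n`, such that for `n ≥ 3`, `2 ≤ ℓ ≤ n − 1` and nodes
`x_{ℓ−1,2n}, x_{ℓ+1,2n} ∈ J₁` one has `x_{ℓ+1,2n} − x_{ℓ−1,2n} ≥ C/n`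
(nodes are `1`-based, so `x_{ℓ,2n}` is `ad.x ⟨ℓ-1,_⟩`). -/
theorem angelesco_node_spacing_lower_bound
    (μ₁ μ₂ : Measure ℝ) [IsFiniteMeasure μ₁] [IsFiniteMeasure μ₂]
    (a₁ b₁ a₂ b₂ : ℝ) (hab₁ : a₁ < b₁) (hgap : b₁ ≤ a₂) (hab₂ : a₂ < b₂)
    (hsupp₁ : μ₁ (Set.Icc a₁ b₁)ᶜ = 0) (hsupp₂ : μ₂ (Set.Icc a₂ b₂)ᶜ = 0)
    (hinf₁ : ∀ s : Finset ℝ, μ₁ ((s : Set ℝ))ᶜ ≠ 0)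
    (hinf₂ : ∀ s : Finset ℝ, μ₂ ((s : Set ℝ))ᶜ ≠ 0)
    (hmom₁ : ∀ k : ℕ, Integrable (fun t : ℝ => t ^ k) μ₁)
    (hmom₂ : ∀ k : ℕ, Integrable (fun t : ℝ => t ^ k) μ₂)
    (c₀ d₀ : ℝ) (hc₀d₀ : c₀ ≤ d₀) (hJ : Set.Icc c₀ d₀ ⊆ Set.Ioo a₁ b₁)
    (hac : ∃ U : Set ℝ, IsOpen U ∧ Set.Icc c₀ d₀ ⊆ U ∧
      ∃ ρ : ℝ → ENNReal, μ₁.restrict U = (volume.restrict U).withDensity ρ ∧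
        ∃ c M : ℝ, 0 < c ∧ ∀ t ∈ U, ENNReal.ofReal c ≤ ρ t ∧ ρ t ≤ ENNReal.ofReal M) :
    ∃ C > (0 : ℝ), ∀ (n : ℕ) (hn : 3 ≤ n) (ad : Angelesco μ₁ μ₂ a₁ b₁ a₂ b₂ n)
      (ℓ : ℕ) (hℓ₁ : 2 ≤ ℓ) (hℓ₂ : ℓ ≤ n - 1),
        ad.x ⟨ℓ - 2, by omega⟩ ∈ Set.Icc c₀ d₀ → ad.x ⟨ℓ, by omega⟩ ∈ Set.Icc c₀ d₀ →
          C / n ≤ ad.x ⟨ℓ, by omega⟩ - ad.x ⟨ℓ - 2, by omega⟩ := by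
  obtain ⟨U, hU, hJU, ρ, hρ, c, M, hc, hρ_bounds⟩ := hac
  obtain ⟨C, hC, spacing⟩ := angelesco_node_spacing_lower_bound_general (μ₂ := μ₂) (b₂ := b₂)
    hgap hsupp₁ isCompact_Icc hJ hU hJU hρ hc hρ_bounds
  refine ⟨C, hC, fun n hn ad ℓ hℓ₁ hℓ₂ hmem _ => ?_⟩
  have node_lt : ad.x ⟨ℓ - 2, by omega⟩ < ad.x ⟨ℓ, by omega⟩ :=
    ad.mono (Fin.mk_lt_mk.2 (by omega))
  rw [← abs_of_pos (sub_pos.2 node_lt)]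
  exact spacing n ad _ _ (by dsimp; omega) (by dsimp; omega) (ad.mono.lt_iff_lt.1 node_lt).ne hmem
end

section
/- Let f : [a₁,b₁] → ℝ be continuous, let b* ∈ (a₁,b₁], and suppose f ≡ 0 on [b*,b₁]. Suppose that for each n ≥ 1 there exists a real polynomial R_n of degree ≤ n such that sup_{x ∈ [a₁,b₁]} |f(x) − R_n(x) qₙ(x)| → 0 as n → ∞. Then the quadrature sums restricted to the nodes in [a₁,b₁] converge to the integral: lim_{n→∞} ∑_{j=1}^{n} λ_{j,2n}^{(1)} f(x_{j,2n}) = ∫_{[a₁,b₁]} f(x) dμ₁(x). -/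
open MeasureTheory

/-!
The crux is that the weights of the `n` left nodes are nonnegative and bounded in sum by the mass
of `μ₁`. Both follow by testing the rule, exact below degree `3n`, on suitable polynomials:

* `qₙ(t) ∏_{i ≠ j} (t - xᵢ)²`, with `i` running over the left nodes, isolates the weight at `xⱼ`;
* a polynomial `H` of degree `< 3n` with `H = 1` at the left nodes, `H = 0` at the right nodes and
  `H ≤ 1` to the left of the right nodes has quadrature sum `∑ λⱼ` over the left nodes.

Such an `H` is `1 - pₙ² S`, where `S` interpolates `1 / pₙ²` at the right nodes. That `S ≥ 0` to the
left of them reflects the complete monotonicity of `1 / pₙ²`, and comes out of an induction on both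
sets of nodes. Finally `Rₙ qₙ` vanishes at the right nodes, so the left part of the rule already
integrates it exactly, and the bound on the left weights transfers this to `f`.
-/

section Interpolation

open Polynomial Finset

variable {R ι : Type*} [CommRing R]

/-- The nodal polynomial with all its factors negated, hence nonnegative to the left of the nodes.
Over the right nodes of an Angelesco system it is the polynomial `qₙ`. -/
noncomputable def negNodal (s : Finset ι) (v : ι → R) : R[X] :=
  ∏ i ∈ s, (C (v i) - X)

theorem eval_negNodal (s : Finset ι) (v : ι → R) (t : R) :
    (negNodal s v).eval t = ∏ i ∈ s, (v i - t) := by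
  simp [negNodal, eval_prod]

theorem eval_negNodal_at_node {s : Finset ι} (v : ι → R) {i : ι} (hi : i ∈ s) :
    (negNodal s v).eval (v i) = 0 := by
  rw [eval_negNodal, prod_eq_zero hi (sub_self _)]

theorem degree_C_sub_X [Nontrivial R] (a : R) : (C a - X : R[X]).degree = 1 := by
  rw [← neg_sub, degree_neg, degree_X_sub_C]

theorem degree_negNodal [IsDomain R] (s : Finset ι) (v : ι → R) :
    (negNodal s v).degree = #s := by
  simp [negNodal, degree_prod, degree_C_sub_X]

variable {K : Type*} [Field K] [LinearOrder K] [IsStrictOrderedRing K]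

-- If `S₁` and `S₂` solve the problem for `(s, b ::ₘ t)` and `(a ::ₘ s, t)`, then
-- `(S₁ + (b - X) S₂) / (b - a)` solves it for `(a ::ₘ s, b ::ₘ t)`, as `(z - a) + (b - z) = b - a`.
theorem exists_nonneg_interpolant_inv_prod (s t : Multiset K) (hst : ∀ c ∈ s, ∀ z ∈ t, c < z) :
    ∃ S : K[X], S.degree < t.card ∧ (∀ z ∈ t, (s.map (z - ·)).prod * S.eval z = 1) ∧
      ∀ y, (∀ z ∈ t, y ≤ z) → 0 ≤ S.eval y := by
  induction t using Multiset.induction_on generalizing s with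
  | empty => exact ⟨0, by simp⟩
  | cons b t iht =>
    induction s using Multiset.induction_on with
    | empty =>
      refine ⟨1, ?_, by simp⟩
      rw [degree_one, Multiset.card_cons]
      exact_mod_cast Nat.succ_pos _
    | cons a s ihs =>
      have hab : 0 < b - a :=
        sub_pos.2 (hst a (Multiset.mem_cons_self a s) b (Multiset.mem_cons_self b t))
      obtain ⟨S₁, hdeg₁, heval₁, hnonneg₁⟩ :=
        ihs fun c hc => hst c (Multiset.mem_cons_of_mem hc)
      obtain ⟨S₂, hdeg₂, heval₂, hnonneg₂⟩ :=
        iht (a ::ₘ s) fun c hc z hz => hst c hc z (Multiset.mem_cons_of_mem hz)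
      have heval (y : K) : (C (b - a)⁻¹ * (S₁ + (C b - X) * S₂)).eval y =
          (b - a)⁻¹ * (S₁.eval y + (b - y) * S₂.eval y) := by simp
      refine ⟨C (b - a)⁻¹ * (S₁ + (C b - X) * S₂), ?_, fun z hz => ?_, fun y hy => ?_⟩
      · rw [degree_C_mul (inv_ne_zero hab.ne')]
        refine (degree_add_le _ _).trans_lt (max_lt hdeg₁ ?_)
        rw [degree_mul, degree_C_sub_X, Multiset.card_cons, add_comm,
          Nat.cast_add, Nat.cast_one]
        exact WithBot.add_lt_add_right WithBot.one_ne_bot hdeg₂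
      · have h₁ := heval₁ z hz
        have h₂ : (b - z) * (((a ::ₘ s).map (z - ·)).prod * S₂.eval z) = b - z := by
          rcases Multiset.mem_cons.1 hz with rfl | hz
          · simp
          · rw [heval₂ z hz, mul_one]
        rw [Multiset.map_cons, Multiset.prod_cons] at h₂ ⊢
        rw [heval]
        field_simp
        linear_combination (z - a) * h₁ + h₂
      · have hby : 0 ≤ b - y := sub_nonneg.2 (hy b (Multiset.mem_cons_self b t))
        have hS₁ := hnonneg₁ y hy
        have hS₂ := hnonneg₂ y fun z hz => hy z (Multiset.mem_cons_of_mem hz)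
        rw [heval]
        positivity

theorem exists_eval_eq_one_and_eval_eq_zero_and_eval_le_one {L U : Finset ι} {x : ι → K}
    (hL : L.Nonempty) (hLU : ∀ i ∈ L, ∀ j ∈ U, x i < x j) :
    ∃ H : K[X], H.degree < (2 * #L + #U : ℕ) ∧ (∀ i ∈ L, H.eval (x i) = 1) ∧
      (∀ j ∈ U, H.eval (x j) = 0) ∧ ∀ y, (∀ j ∈ U, y ≤ x j) → H.eval y ≤ 1 := by
  obtain ⟨S, hdeg, heval, hnonneg⟩ := exists_nonneg_interpolant_inv_prod
    (2 • L.val.map x) (U.val.map x) (by simpa using hLU)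
  have hH (y : K) : (1 - Lagrange.nodal L x ^ 2 * S).eval y =
      1 - (∏ i ∈ L, (y - x i)) ^ 2 * S.eval y := by simp [Lagrange.eval_nodal]
  refine ⟨1 - Lagrange.nodal L x ^ 2 * S, ?_, fun i hi => ?_, fun j hj => ?_, fun y hy => ?_⟩
  · have hpos : 0 < 2 * #L + #U := by have := hL.card_pos; omega
    refine (degree_sub_le _ _).trans_lt (max_lt ?_ ?_)
    · rw [degree_one]
      exact_mod_cast hpos
    · rw [degree_mul, degree_pow, Lagrange.degree_nodal, Nat.cast_add]
      rw [Multiset.card_map, card_val] at hdeg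
      simpa using WithBot.add_lt_add_left (WithBot.natCast_ne_bot (2 * #L)) hdeg
  · rw [hH, prod_eq_zero hi (sub_self _)]
    ring
  · have hprod := heval (x j) (Multiset.mem_map_of_mem x hj)
    rw [Multiset.map_nsmul, Multiset.prod_nsmul, Multiset.map_map] at hprod
    rw [hH, sub_eq_zero]
    exact hprod.symm
  · rw [hH, sub_le_self_iff]
    exact mul_nonneg (sq_nonneg _) (hnonneg y (by simpa using hy))

end Interpolation

section Quadrature

open Polynomial Finset

variable {ι : Type*} {μ : Measure ℝ} {x w : ι → ℝ}

/-- The rule with nodes `x i` and weights `w i`, `i ∈ s`, integrates every polynomial of degree less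
than `d` exactly against `μ`. -/
def IsExactQuadrature (μ : Measure ℝ) (s : Finset ι) (x w : ι → ℝ) (d : ℕ) : Prop :=
  ∀ P : ℝ[X], P.degree < d → ∑ i ∈ s, w i * P.eval (x i) = ∫ t, P.eval t ∂μ

theorem integral_mul_eval_eq_zero_of_degree_lt {g : ℝ → ℝ} {m : ℕ}
    (hint : ∀ k < m, Integrable (fun t => g t * t ^ k) μ)
    (horth : ∀ k < m, ∫ t, g t * t ^ k ∂μ = 0) {Q : ℝ[X]} (hQ : Q.degree < m) :
    ∫ t, g t * Q.eval t ∂μ = 0 := by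
  have hlt (k : ℕ) (hk : k ∈ Q.support) : k < m :=
    WithBot.coe_lt_coe.1 ((le_degree_of_mem_supp k hk).trans_lt hQ)
  simp_rw [eval_eq_sum, Polynomial.sum_def, mul_sum, mul_left_comm (g _)]
  rw [integral_finsetSum _ fun k hk => (hint k (hlt k hk)).const_mul _]
  exact sum_eq_zero fun k hk => by rw [integral_const_mul, horth k (hlt k hk), mul_zero]

theorem degree_divByMonic_lt_of_degree_lt_add {R : Type*} [Ring R] [Nontrivial R] {P D : R[X]}
    (hD : D.Monic) {m : ℕ} (hP : P.degree < D.degree + m) : (P /ₘ D).degree < m := by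
  rcases lt_or_ge P.degree D.degree with hlt | hge
  · rw [(divByMonic_eq_zero_iff hD).2 hlt, degree_zero]
    exact WithBot.bot_lt_coe m
  · rw [← degree_add_divByMonic hD hge] at hP
    exact lt_of_add_lt_add_left hP

theorem integrable_of_continuousOn_of_ae_mem {α E : Type*} [TopologicalSpace α] [T2Space α]
    [MeasurableSpace α] [OpensMeasurableSpace α] [NormedAddCommGroup E] {ν : Measure α}
    [IsFiniteMeasureOnCompacts ν] {s : Set α} (hs : IsCompact s) (hν : ∀ᵐ t ∂ν, t ∈ s)
    {g : α → E} (hg : ContinuousOn g s) : Integrable g ν := by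
  simpa only [IntegrableOn, Measure.restrict_eq_self_of_ae_mem hν] using
    hg.integrableOn_compact (μ := ν) hs

variable [DecidableEq ι]

theorem isExactQuadrature_integral_basis (hint : ∀ P : ℝ[X], Integrable (fun t => P.eval t) μ)
    {s : Finset ι} (hx : Set.InjOn x s) :
    IsExactQuadrature μ s x (fun i => ∫ t, (Lagrange.basis s x i).eval t ∂μ) #s := by
  intro P hP
  have heval (t : ℝ) : P.eval t = ∑ i ∈ s, (Lagrange.basis s x i).eval t * P.eval (x i) := by
    conv_lhs => rw [Lagrange.eq_interpolate hx hP]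
    simp [Lagrange.interpolate_apply, eval_finsetSum, mul_comm]
  calc ∑ i ∈ s, (∫ t, (Lagrange.basis s x i).eval t ∂μ) * P.eval (x i)
    _ = ∫ t, ∑ i ∈ s, (Lagrange.basis s x i).eval t * P.eval (x i) ∂μ := by
      rw [integral_finsetSum _ fun i _ => (hint _).mul_const _]
      simp_rw [integral_mul_const]
    _ = ∫ t, P.eval t ∂μ := by simp_rw [← heval]

theorem isExactQuadrature_integral_basis_of_orthogonal
    (hint : ∀ P : ℝ[X], Integrable (fun t => P.eval t) μ) {s : Finset ι} (hx : Set.InjOn x s)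
    {m : ℕ} (horth : ∀ k < m, ∫ t, (Lagrange.nodal s x).eval t * t ^ k ∂μ = 0) :
    IsExactQuadrature μ s x (fun i => ∫ t, (Lagrange.basis s x i).eval t ∂μ) (#s + m) := by
  intro P hP
  set N := Lagrange.nodal s x
  have hN : N.Monic := Lagrange.nodal_monic
  have hdegN : N.degree = #s := Lagrange.degree_nodal
  have hintN (Q : ℝ[X]) : Integrable (fun t => N.eval t * Q.eval t) μ := by
    simpa only [eval_mul] using hint (N * Q)
  have hquot : ∫ t, N.eval t * (P /ₘ N).eval t ∂μ = 0 :=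
    integral_mul_eval_eq_zero_of_degree_lt
      (fun k _ => by simpa only [eval_pow, eval_X] using hintN (X ^ k)) horth
      (degree_divByMonic_lt_of_degree_lt_add hN (by rwa [hdegN, ← Nat.cast_add]))
  have hrem := isExactQuadrature_integral_basis hint hx (P %ₘ N)
    (hdegN ▸ degree_modByMonic_lt P hN)
  have hsplit (t : ℝ) : P.eval t = (P %ₘ N).eval t + N.eval t * (P /ₘ N).eval t := by
    conv_lhs => rw [← modByMonic_add_div P N, eval_add, eval_mul]
  have hnode (i : ι) (hi : i ∈ s) : P.eval (x i) = (P %ₘ N).eval (x i) := by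
    rw [hsplit, Lagrange.eval_nodal_at_node hi, zero_mul, add_zero]
  calc ∑ i ∈ s, (∫ t, (Lagrange.basis s x i).eval t ∂μ) * P.eval (x i)
    _ = ∑ i ∈ s, (∫ t, (Lagrange.basis s x i).eval t ∂μ) * (P %ₘ N).eval (x i) :=
      sum_congr rfl fun i hi => by rw [hnode i hi]
    _ = ∫ t, (P %ₘ N).eval t ∂μ + ∫ t, N.eval t * (P /ₘ N).eval t ∂μ := by
      rw [hrem, hquot, add_zero]
    _ = ∫ t, P.eval t ∂μ := by
      simp_rw [hsplit]
      rw [integral_add (hint _) (hintN _)]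

namespace IsExactQuadrature

variable {L U : Finset ι}

theorem sum_left_eq_integral {d : ℕ} (h : IsExactQuadrature μ (L ∪ U) x w d) {P : ℝ[X]}
    (hdeg : P.degree < d) (hU : ∀ j ∈ U, P.eval (x j) = 0) :
    ∑ i ∈ L, w i * P.eval (x i) = ∫ t, P.eval t ∂μ := by
  rw [← h P hdeg]
  refine sum_subset subset_union_left fun j hj hjL => ?_
  rw [hU j ((mem_union.1 hj).resolve_left hjL), mul_zero]

theorem weight_nonneg (h : IsExactQuadrature μ (L ∪ U) x w (2 * #L + #U))
    (hx : Set.InjOn x L) (hLU : ∀ i ∈ L, ∀ j ∈ U, x i < x j)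
    (hμ : ∀ᵐ t ∂μ, ∀ j ∈ U, t ≤ x j) {i : ι} (hi : i ∈ L) : 0 ≤ w i := by
  set P := negNodal U x * Lagrange.nodal (L.erase i) x ^ 2 with hP
  have heval (t : ℝ) :
      P.eval t = (∏ j ∈ U, (x j - t)) * (∏ k ∈ L.erase i, (t - x k)) ^ 2 := by
    simp [hP, eval_negNodal, Lagrange.eval_nodal]
  have hdeg : P.degree < (2 * #L + #U : ℕ) := by
    have hcard := card_erase_add_one hi
    calc P.degree
      _ ≤ #U + (2 : ℕ) * #(L.erase i) := degree_mul_le_of_le (degree_negNodal U x).le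
        (degree_pow_le_of_le 2 Lagrange.degree_nodal.le)
      _ < (2 * #L + #U : ℕ) := by
        norm_cast
        omega
  have hint : 0 ≤ ∫ t, P.eval t ∂μ := by
    refine integral_nonneg_of_ae (hμ.mono fun t ht => ?_)
    simp only [Pi.zero_apply, heval]
    exact mul_nonneg (prod_nonneg fun j hj => sub_nonneg.2 (ht j hj)) (sq_nonneg _)
  have hpos : 0 < P.eval (x i) := by
    rw [heval]
    refine mul_pos (prod_pos fun j hj => sub_pos.2 (hLU i hi j hj))
      (sq_pos_of_ne_zero (prod_ne_zero_iff.2 fun k hk => sub_ne_zero.2 fun hik => ?_))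
    exact (ne_of_mem_erase hk) (hx (mem_of_mem_erase hk) hi hik.symm)
  have hsum : ∑ k ∈ L, w k * P.eval (x k) = w i * P.eval (x i) := by
    refine sum_eq_single_of_mem i hi fun k hk hki => ?_
    rw [hP, eval_mul, eval_pow, Lagrange.eval_nodal_at_node (mem_erase.2 ⟨hki, hk⟩)]
    ring
  rw [← h.sum_left_eq_integral hdeg fun j hj => by
    rw [hP, eval_mul, eval_negNodal_at_node x hj, zero_mul], hsum] at hint
  exact nonneg_of_mul_nonneg_left hint hpos

variable [IsFiniteMeasure μ]

theorem sum_left_weight_le (h : IsExactQuadrature μ (L ∪ U) x w (2 * #L + #U))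
    (hint : ∀ P : ℝ[X], Integrable (fun t => P.eval t) μ)
    (hLU : ∀ i ∈ L, ∀ j ∈ U, x i < x j) (hμ : ∀ᵐ t ∂μ, ∀ j ∈ U, t ≤ x j) :
    ∑ i ∈ L, w i ≤ μ.real Set.univ := by
  rcases L.eq_empty_or_nonempty with rfl | hL
  · simp
  obtain ⟨H, hdeg, hone, hzero, hle⟩ :=
    exists_eval_eq_one_and_eval_eq_zero_and_eval_le_one hL hLU
  calc ∑ i ∈ L, w i
    _ = ∑ i ∈ L, w i * H.eval (x i) := sum_congr rfl fun i hi => by rw [hone i hi, mul_one]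
    _ = ∫ t, H.eval t ∂μ := h.sum_left_eq_integral hdeg hzero
    _ ≤ ∫ _, (1 : ℝ) ∂μ := integral_mono_ae (hint H) (integrable_const 1) (hμ.mono hle)
    _ = μ.real Set.univ := by simp

theorem abs_sum_left_sub_integral_le (h : IsExactQuadrature μ (L ∪ U) x w (2 * #L + #U))
    (hint : ∀ P : ℝ[X], Integrable (fun t => P.eval t) μ)
    (hx : Set.InjOn x L) (hLU : ∀ i ∈ L, ∀ j ∈ U, x i < x j) (hμ : ∀ᵐ t ∂μ, ∀ j ∈ U, t ≤ x j)
    {G : ℝ[X]} (hdeg : G.degree < (2 * #L + #U : ℕ)) (hG : ∀ j ∈ U, G.eval (x j) = 0)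
    {f : ℝ → ℝ} (hf : Integrable f μ) {δ : ℝ} (hδ : 0 ≤ δ)
    (hnode : ∀ i ∈ L, |f (x i) - G.eval (x i)| ≤ δ) (hae : ∀ᵐ t ∂μ, |f t - G.eval t| ≤ δ) :
    |∑ i ∈ L, w i * f (x i) - ∫ t, f t ∂μ| ≤ 2 * δ * μ.real Set.univ := by
  have hsum : |∑ i ∈ L, w i * f (x i) - ∑ i ∈ L, w i * G.eval (x i)| ≤ δ * μ.real Set.univ :=
    calc |∑ i ∈ L, w i * f (x i) - ∑ i ∈ L, w i * G.eval (x i)|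
      _ = |∑ i ∈ L, w i * (f (x i) - G.eval (x i))| := by simp_rw [mul_sub, sum_sub_distrib]
      _ ≤ ∑ i ∈ L, |w i * (f (x i) - G.eval (x i))| := abs_sum_le_sum_abs _ _
      _ ≤ ∑ i ∈ L, w i * δ := sum_le_sum fun i hi => by
        have hw := h.weight_nonneg hx hLU hμ hi
        rw [abs_mul, abs_of_nonneg hw]
        exact mul_le_mul_of_nonneg_left (hnode i hi) hw
      _ = δ * ∑ i ∈ L, w i := by rw [← sum_mul, mul_comm]
      _ ≤ δ * μ.real Set.univ :=
        mul_le_mul_of_nonneg_left (h.sum_left_weight_le hint hLU hμ) hδ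
  have hintegral : |∫ t, G.eval t ∂μ - ∫ t, f t ∂μ| ≤ δ * μ.real Set.univ := by
    rw [abs_sub_comm, ← integral_sub hf (hint G)]
    exact norm_integral_le_of_norm_le_const (f := fun t => f t - G.eval t) hae
  rw [h.sum_left_eq_integral hdeg hG] at hsum
  calc |∑ i ∈ L, w i * f (x i) - ∫ t, f t ∂μ|
    _ ≤ |∑ i ∈ L, w i * f (x i) - ∫ t, G.eval t ∂μ| + |∫ t, G.eval t ∂μ - ∫ t, f t ∂μ| :=
      abs_sub_le _ _ _
    _ ≤ 2 * δ * μ.real Set.univ := by linarith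

end IsExactQuadrature

end Quadrature

namespace Angelesco

open Polynomial Finset

/-- The indices of the first `n` zeros, those in `(a₁, b₁)`. -/
abbrev leftIndices (n : ℕ) : Finset (Fin (2 * n)) := {i | (i : ℕ) < n}

/-- The indices of the last `n` zeros, those in `(a₂, b₂)`. -/
abbrev rightIndices (n : ℕ) : Finset (Fin (2 * n)) := {i | n ≤ (i : ℕ)}

theorem leftIndices_union_rightIndices (n : ℕ) : leftIndices n ∪ rightIndices n = univ := by
  ext i
  simpa using lt_or_ge (i : ℕ) n

theorem card_leftIndices (n : ℕ) : #(leftIndices n) = n := by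
  rw [Fin.card_filter_val_lt]
  omega

theorem card_rightIndices (n : ℕ) : #(rightIndices n) = n := by
  have hcompl : rightIndices n = (leftIndices n)ᶜ := by
    ext i
    simp
  rw [hcompl, card_compl, card_leftIndices, Fintype.card_fin]
  omega

variable {μ₁ μ₂ : Measure ℝ} {a₁ b₁ a₂ b₂ : ℝ} {n : ℕ}

theorem x_lt_x (ad : Angelesco μ₁ μ₂ a₁ b₁ a₂ b₂ n) {i j : Fin (2 * n)}
    (hi : i ∈ leftIndices n) (hj : j ∈ rightIndices n) : ad.x i < ad.x j :=
  ad.mono (Fin.lt_def.2 ((mem_filter.1 hi).2.trans_le (mem_filter.1 hj).2))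

theorem isExactQuadrature_qweight (ad : Angelesco μ₁ μ₂ a₁ b₁ a₂ b₂ n)
    (hint : ∀ P : ℝ[X], Integrable (fun t => P.eval t) μ₁) :
    IsExactQuadrature μ₁ (leftIndices n ∪ rightIndices n) ad.x (qweight ad μ₁)
      (2 * #(leftIndices n) + #(rightIndices n)) := by
  rw [leftIndices_union_rightIndices, card_leftIndices, card_rightIndices]
  have h := isExactQuadrature_integral_basis_of_orthogonal hint (s := univ) (m := n)
    ad.mono.injective.injOn (by simpa only [Lagrange.eval_nodal] using ad.orth1)
  rwa [card_univ, Fintype.card_fin] at h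

theorem abs_sum_left_sub_integral_le [IsFiniteMeasure μ₁] (ad : Angelesco μ₁ μ₂ a₁ b₁ a₂ b₂ n)
    (hgap : b₁ ≤ a₂) (hsupp : ∀ᵐ t ∂μ₁, t ∈ Set.Icc a₁ b₁) {Q : ℝ[X]} (hQ : Q.degree < (2 * n : ℕ))
    {f : ℝ → ℝ} (hf : Integrable f μ₁) {δ : ℝ} (hδ : 0 ≤ δ)
    (hfQ : ∀ y ∈ Set.Icc a₁ b₁,
      |f y - Q.eval y * ∏ i ∈ rightIndices n, (ad.x i - y)| ≤ δ) :
    |∑ i ∈ leftIndices n, qweight ad μ₁ i * f (ad.x i) - ∫ t, f t ∂μ₁| ≤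
      2 * δ * μ₁.real Set.univ := by
  have hint (P : ℝ[X]) : Integrable (fun t => P.eval t) μ₁ :=
    integrable_of_continuousOn_of_ae_mem isCompact_Icc hsupp P.continuousOn
  have hright : ∀ᵐ t ∂μ₁, ∀ j ∈ rightIndices n, t ≤ ad.x j := hsupp.mono fun t ht j hj =>
    ht.2.trans (hgap.trans (ad.mem2 j (mem_filter.1 hj).2).1.le)
  have hdeg : (Q * negNodal (rightIndices n) ad.x).degree <
      (2 * #(leftIndices n) + #(rightIndices n) : ℕ) := by
    rw [card_leftIndices, Nat.cast_add, degree_mul, degree_negNodal]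
    exact WithBot.add_lt_add_right (WithBot.natCast_ne_bot _) hQ
  have hclose (y : ℝ) (hy : y ∈ Set.Icc a₁ b₁) :
      |f y - (Q * negNodal (rightIndices n) ad.x).eval y| ≤ δ := by
    rw [eval_mul, eval_negNodal]
    exact hfQ y hy
  exact (ad.isExactQuadrature_qweight hint).abs_sum_left_sub_integral_le hint
    ad.mono.injective.injOn (fun i hi j hj => ad.x_lt_x hi hj) hright hdeg
    (fun j hj => by rw [eval_mul, eval_negNodal_at_node _ hj, mul_zero]) hf hδ
    (fun i hi => hclose _ (Set.Ioo_subset_Icc_self (ad.mem1 i (mem_filter.1 hi).2)))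
    (hsupp.mono hclose)

end Angelesco

open Angelesco Filter in
theorem angelesco_quadrature_convergence_weighted_approx_general
    {μ₁ μ₂ : Measure ℝ} [IsFiniteMeasure μ₁] {a₁ b₁ a₂ b₂ : ℝ} (hgap : b₁ ≤ a₂)
    (hsupp : ∀ᵐ t ∂μ₁, t ∈ Set.Icc a₁ b₁) (ad : ∀ n : ℕ, Angelesco μ₁ μ₂ a₁ b₁ a₂ b₂ n)
    {f : ℝ → ℝ} {R : ℕ → Polynomial ℝ} (hRdeg : ∀ᶠ n in atTop, (R n).degree < (2 * n : ℕ))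
    (happrox : TendstoUniformlyOn
      (fun n y => (R n).eval y * ∏ i ∈ rightIndices n, ((ad n).x i - y)) f atTop
      (Set.Icc a₁ b₁)) :
    Tendsto (fun n => ∑ i ∈ leftIndices n, qweight (ad n) μ₁ i * f ((ad n).x i)) atTop
      (nhds (∫ t in Set.Icc a₁ b₁, f t ∂μ₁)) := by
  have hf : Integrable f μ₁ := integrable_of_continuousOn_of_ae_mem isCompact_Icc hsupp <|
    happrox.continuousOn (Frequently.of_forall fun n => by fun_prop)
  rw [Measure.restrict_eq_self_of_ae_mem hsupp, Metric.tendsto_nhds]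
  intro ε hε
  set δ := ε / (2 * μ₁.real Set.univ + 1) with hδ
  have hδpos : 0 < δ := by positivity
  filter_upwards [hRdeg, Metric.tendstoUniformlyOn_iff.1 happrox δ hδpos] with n hn hclose
  calc |∑ i ∈ leftIndices n, qweight (ad n) μ₁ i * f ((ad n).x i) - ∫ t, f t ∂μ₁|
    _ ≤ 2 * δ * μ₁.real Set.univ := (ad n).abs_sum_left_sub_integral_le hgap hsupp hn hf hδpos.le
      fun y hy => (hclose y hy).le
    _ < δ * (2 * μ₁.real Set.univ + 1) := by linarith
    _ = ε := by rw [hδ, div_mul_cancel₀ _ (by positivity)]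

theorem eventually_degree_lt_two_mul {K : Type*} [Semiring K] {R : ℕ → Polynomial K}
    (hR : ∀ n, (R n).natDegree ≤ n) :
    ∀ᶠ n in Filter.atTop, (R n).degree < (2 * n : ℕ) := by
  filter_upwards [Filter.eventually_gt_atTop 0] with n hn
  have hlt : (R n).natDegree < 2 * n := (hR n).trans_lt (by omega)
  exact Polynomial.degree_le_natDegree.trans_lt (by exact_mod_cast hlt)

theorem tendstoUniformlyOn_atTop_of_dist_le {α β : Type*} [PseudoMetricSpace β] {F : ℕ → α → β}
    {f : α → β} {s : Set α}
    (h : ∀ ε > 0, ∃ N, ∀ n ≥ N, ∀ y ∈ s, dist (f y) (F n y) ≤ ε) :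
    TendstoUniformlyOn F f Filter.atTop s := by
  refine Metric.tendstoUniformlyOn_iff.2 fun ε hε => ?_
  filter_upwards [Filter.eventually_atTop.2 (h (ε / 2) (half_pos hε))] with n hn y hy
  exact (hn y hy).trans_lt (half_lt_self hε)

/-- **Convergence of the restricted first quadrature rule** (Theorem 3.1).
Let `f` be continuous on `[a₁,b₁]`, vanishing on `[b*,b₁]`, and suppose `f` can be
approximated uniformly on `[a₁,b₁]` by weighted polynomials `Rₙ qₙ` with `deg Rₙ ≤ n`,
where `qₙ(y) = ∏_{i=n+1}^{2n} (x_{i,2n} − y)`.  Then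
`∑_{j=1}^{n} λ_{j,2n}^{(1)} f(x_{j,2n}) → ∫_{[a₁,b₁]} f dμ₁`. -/
theorem angelesco_quadrature_convergence_weighted_approx
    (μ₁ μ₂ : Measure ℝ) [IsFiniteMeasure μ₁] [IsFiniteMeasure μ₂]
    (a₁ b₁ a₂ b₂ : ℝ) (hab₁ : a₁ < b₁) (hgap : b₁ ≤ a₂) (hab₂ : a₂ < b₂)
    (hsupp₁ : μ₁ (Set.Icc a₁ b₁)ᶜ = 0) (hsupp₂ : μ₂ (Set.Icc a₂ b₂)ᶜ = 0)
    (hinf₁ : ∀ s : Finset ℝ, μ₁ ((s : Set ℝ))ᶜ ≠ 0)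
    (hinf₂ : ∀ s : Finset ℝ, μ₂ ((s : Set ℝ))ᶜ ≠ 0)
    (hmom₁ : ∀ k : ℕ, Integrable (fun t : ℝ => t ^ k) μ₁)
    (hmom₂ : ∀ k : ℕ, Integrable (fun t : ℝ => t ^ k) μ₂)
    (ad : ∀ n : ℕ, Angelesco μ₁ μ₂ a₁ b₁ a₂ b₂ n)
    (f : ℝ → ℝ) (hf : ContinuousOn f (Set.Icc a₁ b₁))
    (bstar : ℝ) (hbstar : bstar ∈ Set.Ioc a₁ b₁)
    (hf0 : ∀ t ∈ Set.Icc bstar b₁, f t = 0)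
    (R : ℕ → Polynomial ℝ) (hRdeg : ∀ n, (R n).natDegree ≤ n)
    (happrox : ∀ ε > (0 : ℝ), ∃ N : ℕ, ∀ n ≥ N, ∀ y ∈ Set.Icc a₁ b₁,
      |f y - (R n).eval y *
        ∏ i ∈ Finset.univ.filter (fun i : Fin (2 * n) => n ≤ (i : ℕ)),
          ((ad n).x i - y)| ≤ ε) :
    Filter.Tendsto
      (fun n : ℕ => ∑ i ∈ Finset.univ.filter (fun i : Fin (2 * n) => (i : ℕ) < n),
        qweight (ad n) μ₁ i * f ((ad n).x i))
      Filter.atTop (nhds (∫ t in Set.Icc a₁ b₁, f t ∂μ₁)) := by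
  exact angelesco_quadrature_convergence_weighted_approx_general hgap (mem_ae_iff.2 hsupp₁) ad
    (eventually_degree_lt_two_mul hRdeg) (tendstoUniformlyOn_atTop_of_dist_le happrox)
end

section
/- Assume b₁ < a₂ and set Iₙ = ∫_{[a₁,b₁]} pₙ(x)² qₙ(x) dμ₁(x). Then for every 1 ≤ j ≤ n: Iₙ / ( (b₂ − a₁) · pₙ(x_{n+j,2n})² ) ≤ |λ_{n+j,2n}^{(1)}| · |qₙ′(x_{n+j,2n})| ≤ Iₙ / ( (a₂ − b₁) · pₙ(x_{n+j,2n})² ). -/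
open MeasureTheory

/-- `pₙ(y) = ∏_{i=1}^{n} (y − x_{i,2n})`, the monic factor with zeros in `(a₁,b₁)`. -/
noncomputable def pnfun {μ₁ μ₂ : Measure ℝ} {a₁ b₁ a₂ b₂ : ℝ} {n : ℕ}
    (ad : Angelesco μ₁ μ₂ a₁ b₁ a₂ b₂ n) : ℝ → ℝ :=
  fun y => ∏ i ∈ Finset.univ.filter (fun i : Fin (2 * n) => (i : ℕ) < n), (y - ad.x i)

/-- `qₙ(y) = ∏_{i=n+1}^{2n} (x_{i,2n} − y)`, the factor with zeros in `(a₂,b₂)`,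
normalized to be positive on `[a₁,b₁]`. -/
noncomputable def qnfun {μ₁ μ₂ : Measure ℝ} {a₁ b₁ a₂ b₂ : ℝ} {n : ℕ}
    (ad : Angelesco μ₁ μ₂ a₁ b₁ a₂ b₂ n) : ℝ → ℝ :=
  fun y => ∏ i ∈ Finset.univ.filter (fun i : Fin (2 * n) => n ≤ (i : ℕ)), (ad.x i - y)

/-!
Write `y = x_{n+j,2n}` and let `r` be the product of the factors of `qₙ` not vanishing at `y`. The
fundamental polynomial at `y` is `pₙ r / (pₙ(y) r(y))`, and `|r(y)| = |qₙ′(y)|`. Since `pₙ - pₙ(y)`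
is `x - y` times a polynomial of degree less than `n`, orthogonality of `P_{n,n}` gives
`∫ pₙ² r dμ₁ = pₙ(y) ∫ pₙ r dμ₁`. Hence `|λ| |qₙ′(y)| pₙ(y)² = ∫ pₙ² r dμ₁`, which is compared with
`Iₙ = ∫ pₙ² (y - x) r dμ₁` through `a₂ - b₁ ≤ y - x ≤ b₂ - a₁`.
-/

open Polynomial Lagrange

section Orthogonality

variable {μ : Measure ℝ}

lemma integrable_polynomial_eval (hmom : ∀ k : ℕ, Integrable (fun x : ℝ => x ^ k) μ) (f : ℝ[X]) :
    Integrable (fun x => f.eval x) μ := by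
  simp only [eval_eq_sum_range]
  exact integrable_finsetSum _ fun k _ => (hmom k).const_mul _

lemma integral_eval_mul_eval_eq_zero_of_degree_lt
    (hmom : ∀ k : ℕ, Integrable (fun x : ℝ => x ^ k) μ) {f g : ℝ[X]} {n : ℕ}
    (horth : ∀ k < n, ∫ x, f.eval x * x ^ k ∂μ = 0) (hg : g.degree < n) :
    ∫ x, f.eval x * g.eval x ∂μ = 0 := by
  have integrable_term (k : ℕ) : Integrable (fun x => g.coeff k * (f.eval x * x ^ k)) μ := by
    convert (integrable_polynomial_eval hmom (f * X ^ k)).const_mul (g.coeff k) using 3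
    simp
  calc ∫ x, f.eval x * g.eval x ∂μ
      = ∫ x, ∑ k ∈ g.support, g.coeff k * (f.eval x * x ^ k) ∂μ := by
        simp only [eval_eq_sum (p := g), sum_def, Finset.mul_sum, mul_left_comm]
    _ = ∑ k ∈ g.support, g.coeff k * ∫ x, f.eval x * x ^ k ∂μ := by
        simp only [integral_finsetSum _ fun k _ => integrable_term k, integral_const_mul]
    _ = 0 := Finset.sum_eq_zero fun k hk => by
        have hkn : k < n := by exact_mod_cast (le_degree_of_mem_supp k hk).trans_lt hg
        rw [horth k hkn, mul_zero]

lemma integral_eval_mul_eval_eq_eval_mul_integral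
    (hmom : ∀ k : ℕ, Integrable (fun x : ℝ => x ^ k) μ) {f g : ℝ[X]} {n : ℕ} {y : ℝ}
    (horth : ∀ k < n, ∫ x, ((X - C y) * f).eval x * x ^ k ∂μ = 0) (hg : g.degree ≤ n) :
    ∫ x, f.eval x * g.eval x ∂μ = g.eval y * ∫ x, f.eval x ∂μ := by
  have degree_quotient_lt : (g /ₘ (X - C y)).degree < n := by
    rcases eq_or_ne g 0 with rfl | hg0
    · simp
    · exact (degree_divByMonic_lt g _ hg0 (by simp)).trans_le hg
  have quotient_identity (x : ℝ) : ((X - C y) * f).eval x * (g /ₘ (X - C y)).eval x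
      = f.eval x * g.eval x - g.eval y * f.eval x := by
    have h := congrArg (eval x) (X_sub_C_mul_divByMonic_eq_sub_modByMonic g y)
    simp only [modByMonic_X_sub_C_eq_C_eval, eval_mul, eval_sub, eval_X, eval_C] at h ⊢
    linear_combination f.eval x * h
  have integrable_mul : Integrable (fun x => f.eval x * g.eval x) μ := by
    simpa using integrable_polynomial_eval hmom (f * g)
  have h := integral_eval_mul_eval_eq_zero_of_degree_lt hmom horth degree_quotient_lt
  simp only [quotient_identity] at h
  rwa [integral_sub integrable_mul ((integrable_polynomial_eval hmom f).const_mul _),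
    integral_const_mul, sub_eq_zero] at h

end Orthogonality

section Nodes

variable {ι : Type*} [DecidableEq ι]

lemma lagrange_basis_eq_C_mul_nodal_erase {F : Type*} [Field F] {s : Finset ι} {v : ι → F} {i : ι}
    (hi : i ∈ s) :
    Lagrange.basis s v i = C ((nodal (s.erase i) v).eval (v i))⁻¹ * nodal (s.erase i) v := by
  rw [basis_eq_prod_sub_inv_mul_nodal_div hi, ← nodal_erase_eq_nodal_div hi,
    nodalWeight_eq_eval_nodal_erase_inv]

lemma nodal_mul_nodal_erase_of_isCompl {R : Type*} [CommRing R] [Fintype ι] {s t : Finset ι}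
    (hst : IsCompl s t) (v : ι → R) {j : ι} (hj : j ∈ t) :
    nodal s v * nodal (t.erase j) v = nodal (Finset.univ.erase j) v := by
  apply (monic_X_sub_C (v j)).isRegular.left
  beta_reduce
  rw [mul_left_comm, ← nodal_eq_mul_nodal_erase hj, ← nodal_eq_mul_nodal_erase (Finset.mem_univ j)]
  exact hst.prod_mul_prod _

lemma integral_basis_mul_derivative_nodal_mul_sq {μ : Measure ℝ} [Fintype ι] {s t : Finset ι}
    {v : ι → ℝ} {j : ι} (hmom : ∀ k : ℕ, Integrable (fun x : ℝ => x ^ k) μ)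
    (hst : IsCompl s t) (hv : Function.Injective v)
    (horth : ∀ k < s.card, ∫ x, (nodal Finset.univ v).eval x * x ^ k ∂μ = 0) (hj : j ∈ t) :
    (∫ x, (Lagrange.basis Finset.univ v j).eval x ∂μ) * (derivative (nodal t v)).eval (v j)
        * (nodal s v).eval (v j) ^ 2
      = ∫ x, (nodal s v).eval x ^ 2 * (nodal (t.erase j) v).eval x ∂μ := by
  set p := nodal s v
  set r := nodal (t.erase j) v
  have hpr : p * r = nodal (Finset.univ.erase j) v := nodal_mul_nodal_erase_of_isCompl hst v hj
  have hpr_ne : (p * r).eval (v j) ≠ 0 := by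
    rw [hpr]
    exact eval_nodal_not_at_node fun i hi => hv.ne (Finset.ne_of_mem_erase hi).symm
  have derivative_eq : (derivative (nodal t v)).eval (v j) = r.eval (v j) :=
    eval_nodal_derivative_eval_node_eq hj
  have weight_eq : ∫ x, (Lagrange.basis Finset.univ v j).eval x ∂μ
      = ((p * r).eval (v j))⁻¹ * ∫ x, (p * r).eval x ∂μ := by
    simp only [lagrange_basis_eq_C_mul_nodal_erase (Finset.mem_univ j), ← hpr, eval_C_mul,
      integral_const_mul]
  have integral_mul_p : ∫ x, (p * r).eval x * p.eval x ∂μ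
      = p.eval (v j) * ∫ x, (p * r).eval x ∂μ := by
    refine integral_eval_mul_eval_eq_eval_mul_integral hmom ?_ degree_nodal.le
    rwa [hpr, ← nodal_eq_mul_nodal_erase (Finset.mem_univ j)]
  calc _ = p.eval (v j) * ∫ x, (p * r).eval x ∂μ := by
        rw [weight_eq, derivative_eq]
        rw [eval_mul] at hpr_ne ⊢
        have := left_ne_zero_of_mul hpr_ne
        have := right_ne_zero_of_mul hpr_ne
        field_simp
    _ = ∫ x, p.eval x ^ 2 * r.eval x ∂μ := by
        rw [← integral_mul_p]
        congr with x
        rw [eval_mul]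
        ring

end Nodes

section Sign

variable {ι : Type*}

lemma prod_sub_eq_neg_one_pow_mul_eval_nodal {R : Type*} [CommRing R] (t : Finset ι) (v : ι → R)
    (x : R) : ∏ i ∈ t, (v i - x) = (-1) ^ t.card * (nodal t v).eval x := by
  simp only [eval_nodal, ← Finset.prod_neg, neg_sub]

lemma abs_deriv_prod_sub (t : Finset ι) (v : ι → ℝ) (y : ℝ) :
    |deriv (fun x => ∏ i ∈ t, (v i - x)) y| = |(derivative (nodal t v)).eval y| := by
  simp only [prod_sub_eq_neg_one_pow_mul_eval_nodal, deriv_const_mul_field, Polynomial.deriv,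
    abs_mul, abs_pow, abs_neg, abs_one, one_pow, one_mul]

lemma abs_integral_mul_eval_nodal {μ : Measure ℝ} {t : Finset ι} {v : ι → ℝ} {f : ℝ → ℝ}
    (hf : 0 ≤ f) (hv : ∀ᵐ x ∂μ, ∀ i ∈ t, x ≤ v i) :
    |∫ x, f x * (nodal t v).eval x ∂μ| = ∫ x, f x * ∏ i ∈ t, (v i - x) ∂μ := by
  have integral_nonneg : 0 ≤ ∫ x, f x * ∏ i ∈ t, (v i - x) ∂μ := by
    refine integral_nonneg_of_ae (hv.mono fun x hx => ?_)
    exact mul_nonneg (hf x) (Finset.prod_nonneg fun i hi => sub_nonneg.2 (hx i hi))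
  rw [← abs_of_nonneg integral_nonneg]
  simp only [prod_sub_eq_neg_one_pow_mul_eval_nodal, mul_left_comm (f _), integral_const_mul,
    abs_mul, abs_pow, abs_neg, abs_one, one_pow, one_mul]

end Sign

lemma integral_mul_mem_Icc_of_ae_mem_Icc {α : Type*} [MeasurableSpace α] {μ : Measure α}
    {f g : α → ℝ} {c d : ℝ} (hg : Integrable g μ) (hfg : Integrable (fun x => f x * g x) μ)
    (hf_mem : ∀ᵐ x ∂μ, f x ∈ Set.Icc c d) (hg_nonneg : 0 ≤ᵐ[μ] g) :
    ∫ x, f x * g x ∂μ ∈ Set.Icc (c * ∫ x, g x ∂μ) (d * ∫ x, g x ∂μ) := by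
  rw [← integral_const_mul, ← integral_const_mul]
  constructor
  · refine integral_mono_ae (hg.const_mul c) hfg ?_
    filter_upwards [hf_mem, hg_nonneg] with x hfx hgx
    exact mul_le_mul_of_nonneg_right hfx.1 hgx
  · refine integral_mono_ae hfg (hg.const_mul d) ?_
    filter_upwards [hf_mem, hg_nonneg] with x hfx hgx
    exact mul_le_mul_of_nonneg_right hfx.2 hgx

section TwoSidedBound

variable {ι : Type*} [DecidableEq ι] {μ : Measure ℝ} {s t : Finset ι} {v : ι → ℝ} {j : ι}

lemma abs_integral_basis_mul_abs_deriv_prod_sub [Fintype ι]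
    (hmom : ∀ k : ℕ, Integrable (fun x : ℝ => x ^ k) μ)
    (hst : IsCompl s t) (hv : Function.Injective v) (hvt : ∀ᵐ x ∂μ, ∀ i ∈ t, x ≤ v i)
    (horth : ∀ k < s.card, ∫ x, (nodal Finset.univ v).eval x * x ^ k ∂μ = 0) (hj : j ∈ t) :
    |∫ x, (Lagrange.basis Finset.univ v j).eval x ∂μ|
        * |deriv (fun x => ∏ i ∈ t, (v i - x)) (v j)|
      = (∫ x, (nodal s v).eval x ^ 2 * ∏ i ∈ t.erase j, (v i - x) ∂μ)
          / (nodal s v).eval (v j) ^ 2 := by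
  have hp : (nodal s v).eval (v j) ≠ 0 := eval_nodal_not_at_node fun i hi =>
    hv.ne (Finset.disjoint_right.1 hst.disjoint hj <| · ▸ hi)
  have hvt_erase : ∀ᵐ x ∂μ, ∀ i ∈ t.erase j, x ≤ v i :=
    hvt.mono fun x hx i hi => hx i (Finset.mem_of_mem_erase hi)
  rw [eq_div_iff (pow_ne_zero 2 hp), abs_deriv_prod_sub, ← abs_sq, ← abs_mul, ← abs_mul,
    integral_basis_mul_derivative_nodal_mul_sq hmom hst hv horth hj,
    abs_integral_mul_eval_nodal (fun x => sq_nonneg _) hvt_erase]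

lemma integral_sq_mul_prod_sub_mem_Icc {a₁ b₁ a₂ b₂ : ℝ}
    (hmom : ∀ k : ℕ, Integrable (fun x : ℝ => x ^ k) μ) (hsupp : ∀ᵐ x ∂μ, x ∈ Set.Icc a₁ b₁)
    (hgap : b₁ ≤ a₂) (hvt : ∀ i ∈ t, v i ∈ Set.Icc a₂ b₂) (hj : j ∈ t) (p : ℝ[X]) :
    ∫ x, p.eval x ^ 2 * ∏ i ∈ t, (v i - x) ∂μ ∈
      Set.Icc ((a₂ - b₁) * ∫ x, p.eval x ^ 2 * ∏ i ∈ t.erase j, (v i - x) ∂μ)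
        ((b₂ - a₁) * ∫ x, p.eval x ^ 2 * ∏ i ∈ t.erase j, (v i - x) ∂μ) := by
  have integrable_sq_mul_prod (u : Finset ι) :
      Integrable (fun x => p.eval x ^ 2 * ∏ i ∈ u, (v i - x)) μ := by
    convert integrable_polynomial_eval hmom (p ^ 2 * ∏ i ∈ u, (C (v i) - X)) using 2
    simp [eval_prod]
  have factor_at_node (x : ℝ) : p.eval x ^ 2 * ∏ i ∈ t, (v i - x)
      = (v j - x) * (p.eval x ^ 2 * ∏ i ∈ t.erase j, (v i - x)) := by
    rw [← Finset.mul_prod_erase t _ hj, mul_left_comm]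
  have integrable_factored := integrable_sq_mul_prod t
  simp only [factor_at_node] at integrable_factored ⊢
  refine integral_mul_mem_Icc_of_ae_mem_Icc (integrable_sq_mul_prod _) integrable_factored ?_ ?_
  · filter_upwards [hsupp] with x hx
    exact ⟨sub_le_sub (hvt j hj).1 hx.2, sub_le_sub (hvt j hj).2 hx.1⟩
  · filter_upwards [hsupp] with x hx
    refine mul_nonneg (sq_nonneg _) (Finset.prod_nonneg fun i hi => sub_nonneg.2 ?_)
    exact hx.2.trans (hgap.trans (hvt i (Finset.mem_of_mem_erase hi)).1)

theorem angelesco_alternating_weight_two_sided_bound_general [Fintype ι] {a₁ b₁ a₂ b₂ : ℝ}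
    (hab : a₁ ≤ b₁) (hgap : b₁ < a₂) (hsupp : μ (Set.Icc a₁ b₁)ᶜ = 0)
    (hmom : ∀ k : ℕ, Integrable (fun x : ℝ => x ^ k) μ)
    (hst : IsCompl s t) (hv : Function.Injective v) (hvt : ∀ i ∈ t, v i ∈ Set.Icc a₂ b₂)
    (horth : ∀ k < s.card, ∫ x, (nodal Finset.univ v).eval x * x ^ k ∂μ = 0) (hj : j ∈ t) :
    (∫ x in Set.Icc a₁ b₁, (nodal s v).eval x ^ 2 * ∏ i ∈ t, (v i - x) ∂μ) /
        ((b₂ - a₁) * (nodal s v).eval (v j) ^ 2)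
      ≤ |∫ x, (Lagrange.basis Finset.univ v j).eval x ∂μ| *
          |deriv (fun x => ∏ i ∈ t, (v i - x)) (v j)| ∧
    |∫ x, (Lagrange.basis Finset.univ v j).eval x ∂μ| *
        |deriv (fun x => ∏ i ∈ t, (v i - x)) (v j)|
      ≤ (∫ x in Set.Icc a₁ b₁, (nodal s v).eval x ^ 2 * ∏ i ∈ t, (v i - x) ∂μ) /
          ((a₂ - b₁) * (nodal s v).eval (v j) ^ 2) := by
  have hsupp_ae : ∀ᵐ x ∂μ, x ∈ Set.Icc a₁ b₁ := hsupp
  have hvt_ae : ∀ᵐ x ∂μ, ∀ i ∈ t, x ≤ v i :=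
    hsupp_ae.mono fun x hx i hi => hx.2.trans (hgap.le.trans (hvt i hi).1)
  obtain ⟨lower, upper⟩ :=
    integral_sq_mul_prod_sub_mem_Icc hmom hsupp_ae hgap.le hvt hj (nodal s v)
  have hlength : 0 < b₂ - a₁ := by linarith [(hvt j hj).1, (hvt j hj).2]
  rw [Measure.restrict_eq_self_of_ae_mem hsupp_ae,
    abs_integral_basis_mul_abs_deriv_prod_sub hmom hst hv hvt_ae horth hj, ← div_div, ← div_div]
  constructor
  · gcongr
    exact (div_le_iff₀' hlength).2 upper
  · gcongr
    exact (le_div_iff₀' (sub_pos.2 hgap)).2 lower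

end TwoSidedBound

lemma isCompl_filter_lt_filter_le {ι α : Type*} [Fintype ι] [LinearOrder α] (f : ι → α)
    (c : α) :
    IsCompl (Finset.univ.filter fun i => f i < c) (Finset.univ.filter fun i => c ≤ f i) := by
  classical
  simpa only [Finset.compl_filter, not_lt] using
    isCompl_compl (x := Finset.univ.filter fun i => f i < c)

lemma Angelesco.integral_eval_nodal_mul_pow_eq_zero {μ₁ μ₂ : Measure ℝ} {a₁ b₁ a₂ b₂ : ℝ} {n : ℕ}
    (ad : Angelesco μ₁ μ₂ a₁ b₁ a₂ b₂ n) :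
    ∀ k < (Finset.univ.filter fun i : Fin (2 * n) => (i : ℕ) < n).card,
      ∫ x, (nodal Finset.univ ad.x).eval x * x ^ k ∂μ₁ = 0 := by
  intro k hk
  rw [Fin.card_filter_val_lt] at hk
  simpa only [eval_nodal] using ad.orth1 k (lt_min_iff.1 hk).2

/-- **Two-sided bound for the alternating weights of the first rule** (inequality (2.16)).
With `Iₙ = ∫_{[a₁,b₁]} pₙ² qₙ dμ₁` and `b₁ < a₂`, for `1 ≤ j ≤ n`:
`Iₙ/((b₂−a₁) pₙ(x_{n+j,2n})²) ≤ |λ_{n+j,2n}^{(1)}| |qₙ′(x_{n+j,2n})|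
  ≤ Iₙ/((a₂−b₁) pₙ(x_{n+j,2n})²)`. -/
theorem angelesco_alternating_weight_two_sided_bound
    (μ₁ μ₂ : Measure ℝ) [IsFiniteMeasure μ₁] [IsFiniteMeasure μ₂]
    (a₁ b₁ a₂ b₂ : ℝ) (hab₁ : a₁ < b₁) (hgap : b₁ ≤ a₂) (hab₂ : a₂ < b₂)
    (hsupp₁ : μ₁ (Set.Icc a₁ b₁)ᶜ = 0) (hsupp₂ : μ₂ (Set.Icc a₂ b₂)ᶜ = 0)
    (hinf₁ : ∀ s : Finset ℝ, μ₁ ((s : Set ℝ))ᶜ ≠ 0)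
    (hinf₂ : ∀ s : Finset ℝ, μ₂ ((s : Set ℝ))ᶜ ≠ 0)
    (hmom₁ : ∀ k : ℕ, Integrable (fun t : ℝ => t ^ k) μ₁)
    (hmom₂ : ∀ k : ℕ, Integrable (fun t : ℝ => t ^ k) μ₂)
    (hgaplt : b₁ < a₂)
    (n : ℕ) (hn : 1 ≤ n) (ad : Angelesco μ₁ μ₂ a₁ b₁ a₂ b₂ n)
    (j : Fin (2 * n)) (hj : n ≤ (j : ℕ)) :
    (∫ t in Set.Icc a₁ b₁, (pnfun ad t) ^ 2 * qnfun ad t ∂μ₁) /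
        ((b₂ - a₁) * (pnfun ad (ad.x j)) ^ 2)
      ≤ |qweight ad μ₁ j| * |deriv (qnfun ad) (ad.x j)| ∧
    |qweight ad μ₁ j| * |deriv (qnfun ad) (ad.x j)|
      ≤ (∫ t in Set.Icc a₁ b₁, (pnfun ad t) ^ 2 * qnfun ad t ∂μ₁) /
          ((a₂ - b₁) * (pnfun ad (ad.x j)) ^ 2) := by
  unfold pnfun qnfun qweight
  simpa only [eval_nodal] using
    angelesco_alternating_weight_two_sided_bound_general hab₁.le hgaplt hsupp₁ hmom₁
      (isCompl_filter_lt_filter_le _ n) ad.mono.injective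
      (fun i hi => Set.Ioo_subset_Icc_self (ad.mem2 i (Finset.mem_filter.1 hi).2))
      ad.integral_eval_nodal_mul_pow_eq_zero (Finset.mem_filter.2 ⟨Finset.mem_univ j, hj⟩)
end

section
/- Let 0 < a < b, let ν₂ be a Borel probability measure with support contained in [a,b], and let ν₁ be its reflection, i.e. ν₁(E) = ν₂(−E) for Borel sets E, so that supp(ν₁) ⊆ [−b,−a]. Define the logarithmic potentials U(x;ν_i) = ∫ log(1/|x − y|) dν_i(y), and assume there is a constant ℓ ∈ ℝ such that U(x;ν₁) + 2U(x;ν₂) = ℓ for all x ∈ [a,b] (with both potentials finite there). Then for every x ∈ [a,b], 2U(x;ν₁) + U(x;ν₂) − ℓ ≤ U(a;ν₁) − U(a;ν₂), and U(a;ν₁) − U(a;ν₂) < 0. -/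
open MeasureTheory

/-- The logarithmic potential `U(x;ν) = ∫ log(1/|x − y|) dν(y)`. -/
noncomputable def logPot (ν : Measure ℝ) (x : ℝ) : ℝ :=
  ∫ y, Real.log (1 / |x - y|) ∂ν

/-!
Since `ν₁` is the reflection of `ν₂`, its potential is `U(x;ν₁) = U(-x;ν₂)`, which decreases as
`x ∈ [a,b]` moves away from the support of `ν₁`. The equilibrium condition turns this into
monotonicity of `U(·;ν₂)` on `[a,b]`, so `U(·;ν₁) - U(·;ν₂)`, which equals
`2U(·;ν₁) + U(·;ν₂) - ℓ`, is largest at `a`.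

For the sign at `a`, almost every `y` should be strictly closer to `a` than to `-a`. With
`Real.log 0 = 0` this comparison of logarithms fails at `y = a`, and integrability does not exclude
an atom of `ν₂` there. But an atom would make `U(x;ν₂)` tend to `+∞` as `x` decreases to `a`,
whereas monotonicity bounds it by `U(b;ν₂)`.
-/

open Filter Topology

theorem monotoneOn_of_antitoneOn_of_add_mul_eq {α : Type*} [Preorder α] {s : Set α}
    {f g : α → ℝ} {c ℓ : ℝ} (hc : 0 < c) (hf : AntitoneOn f s)
    (heq : ∀ x ∈ s, f x + c * g x = ℓ) : MonotoneOn g s := by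
  intro x hx z hz hxz
  refine le_of_mul_le_mul_left ?_ hc
  linarith [hf hx hz hxz, heq x hx, heq z hz]

theorem integral_lt_integral_of_ae_lt {α : Type*} [MeasurableSpace α] {μ : Measure α} [NeZero μ]
    {f g : α → ℝ} (hf : Integrable f μ) (hg : Integrable g μ) (hfg : ∀ᵐ x ∂μ, f x < g x) :
    ∫ x, f x ∂μ < ∫ x, g x ∂μ := by
  have hle : f ≤ᵐ[μ] g := hfg.mono fun _ => le_of_lt
  refine (integral_mono_ae hf hg hle).lt_of_ne fun heq => ?_
  obtain ⟨x, hlt, hx⟩ := (hfg.and ((integral_eq_iff_of_ae_le hf hg hle).1 heq)).exists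
  exact hlt.ne hx

theorem tendsto_log_one_div_abs_sub_atTop (a : ℝ) :
    Tendsto (fun x => Real.log (1 / |x - a|)) (𝓝[≠] a) atTop := by
  have hsub : Tendsto (fun x => x - a) (𝓝[≠] a) (𝓝[≠] 0) := by
    refine tendsto_nhdsWithin_iff.2 ⟨?_, ?_⟩
    · exact tendsto_nhdsWithin_of_tendsto_nhds (sub_self a ▸ tendsto_id.sub_const a)
    · filter_upwards [self_mem_nhdsWithin] with x hx using sub_ne_zero.2 hx
  simpa only [Function.comp_def, one_div, Real.log_inv, Real.log_abs] using
    tendsto_neg_atBot_atTop.comp (Real.tendsto_log_nhdsNE_zero.comp hsub)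

section LogPotential

variable {ν : Measure ℝ} {a b x z : ℝ}

theorem logPot_map_neg (ν : Measure ℝ) (x : ℝ) :
    logPot (ν.map fun y => -y) x = logPot ν (-x) := by
  calc logPot (ν.map fun y => -y) x
      = ∫ y, Real.log (1 / |x - -y|) ∂ν := integral_map_equiv (MeasurableEquiv.neg ℝ) _
    _ = logPot ν (-x) := by simp only [logPot, sub_neg_eq_add, ← neg_add', abs_neg]

theorem integrable_log_one_div_abs_sub_of_lt [IsFiniteMeasure ν]
    (hsupp : ∀ᵐ y ∂ν, y ∈ Set.Icc a b) (hx : x < a) :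
    Integrable (fun y => Real.log (1 / |x - y|)) ν := by
  refine .of_mem_Icc (Real.log (1 / (b - x))) (Real.log (1 / (a - x)))
    (by fun_prop) (hsupp.mono fun y hy => ?_)
  have hay : a - x ≤ y - x := sub_le_sub_right hy.1 x
  have hyb : y - x ≤ b - x := sub_le_sub_right hy.2 x
  have hax : 0 < a - x := sub_pos.2 hx
  have hyx : 0 < y - x := hax.trans_le hay
  rw [abs_sub_comm, abs_of_pos hyx]
  simp only [one_div, Real.log_inv]
  exact ⟨neg_le_neg (Real.log_le_log hyx hyb), neg_le_neg (Real.log_le_log hax hay)⟩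

theorem logPot_le_logPot_of_ae_abs_sub_le
    (hintz : Integrable (fun y => Real.log (1 / |z - y|)) ν)
    (hintx : Integrable (fun y => Real.log (1 / |x - y|)) ν)
    (hne : ∀ᵐ y ∂ν, y ≠ x) (hle : ∀ᵐ y ∂ν, |x - y| ≤ |z - y|) :
    logPot ν z ≤ logPot ν x := by
  refine integral_mono_ae hintz hintx ?_
  filter_upwards [hne, hle] with y hyx hxz
  have hpos : 0 < |x - y| := abs_pos.2 (sub_ne_zero.2 hyx.symm)
  simpa only [one_div, Real.log_inv] using neg_le_neg (Real.log_le_log hpos hxz)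

theorem logPot_lt_logPot_of_ae_abs_sub_lt [NeZero ν]
    (hintz : Integrable (fun y => Real.log (1 / |z - y|)) ν)
    (hintx : Integrable (fun y => Real.log (1 / |x - y|)) ν)
    (hne : ∀ᵐ y ∂ν, y ≠ x) (hlt : ∀ᵐ y ∂ν, |x - y| < |z - y|) :
    logPot ν z < logPot ν x := by
  refine integral_lt_integral_of_ae_lt hintz hintx ?_
  filter_upwards [hne, hlt] with y hyx hxz
  have hpos : 0 < |x - y| := abs_pos.2 (sub_ne_zero.2 hyx.symm)
  simpa only [one_div, Real.log_inv] using neg_lt_neg (Real.log_lt_log hpos hxz)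

theorem monotoneOn_logPot_Iio [IsFiniteMeasure ν] (hsupp : ∀ᵐ y ∂ν, y ∈ Set.Icc a b) :
    MonotoneOn (logPot ν) (Set.Iio a) := by
  intro z hz x hx hzx
  refine logPot_le_logPot_of_ae_abs_sub_le (integrable_log_one_div_abs_sub_of_lt hsupp hz)
    (integrable_log_one_div_abs_sub_of_lt hsupp hx) ?_ ?_
  · filter_upwards [hsupp] with y hy using (hx.trans_le hy.1).ne'
  · filter_upwards [hsupp] with y hy
    have hxy : x - y ≤ 0 := sub_nonpos.2 (hx.le.trans hy.1)
    rw [abs_of_nonpos hxy, abs_of_nonpos (by linarith)]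
    linarith

theorem logPot_neg_lt_logPot [NeZero ν]
    (hint_neg : Integrable (fun y => Real.log (1 / |-x - y|)) ν)
    (hint : Integrable (fun y => Real.log (1 / |x - y|)) ν)
    (hx : 0 < x) (hpos : ∀ᵐ y ∂ν, 0 < y) (hatom : ν {x} = 0) :
    logPot ν (-x) < logPot ν x := by
  refine logPot_lt_logPot_of_ae_abs_sub_lt hint_neg hint (measure_eq_zero_iff_ae_notMem.1 hatom) ?_
  filter_upwards [hpos] with y hy
  refine sq_lt_sq.1 ?_
  nlinarith [mul_pos hx hy]

theorem measureReal_singleton_mul_log_sub_le_logPot [IsFiniteMeasure ν] {D : ℝ} (hD : 1 ≤ D)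
    (hdist : ∀ᵐ y ∂ν, |x - y| ≤ D) (hint : Integrable (fun y => Real.log (1 / |x - y|)) ν) :
    ν.real {a} * Real.log (1 / |x - a|) - ν.real Set.univ * Real.log D ≤ logPot ν x := by
  let atomPart : ℝ → ℝ := Set.indicator {a} fun _ => Real.log (1 / |x - a|)
  have hatom : Integrable atomPart ν :=
    (integrable_const _).indicator (measurableSet_singleton a)
  calc ν.real {a} * Real.log (1 / |x - a|) - ν.real Set.univ * Real.log D
      = ∫ y, (atomPart y - Real.log D) ∂ν := by
        rw [integral_sub hatom (integrable_const _),
          integral_indicator_const _ (measurableSet_singleton a), integral_const,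
          smul_eq_mul, smul_eq_mul]
    _ ≤ logPot ν x := by
        refine integral_mono_ae (hatom.sub (integrable_const _)) hint ?_
        filter_upwards [hdist] with y hy
        have hlogD : 0 ≤ Real.log D := Real.log_nonneg hD
        by_cases hya : y = a
        · simpa [atomPart, hya] using hlogD
        · have hlog : Real.log |x - y| ≤ Real.log D := by
            rcases (abs_nonneg (x - y)).eq_or_lt with hzero | hpos
            · simpa [← hzero] using hlogD
            · exact Real.log_le_log hpos hy
          simpa [atomPart, hya] using hlog

theorem measure_singleton_eq_zero_of_frequently_logPot_le [IsFiniteMeasure ν] {C R : ℝ}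
    (hsupp : ∀ᵐ y ∂ν, |a - y| ≤ R)
    (hbdd : ∃ᶠ x in 𝓝[≠] a,
      Integrable (fun y => Real.log (1 / |x - y|)) ν ∧ logPot ν x ≤ C) :
    ν {a} = 0 := by
  by_contra hatom
  let D := |R| + 1
  have hmass : 0 < ν.real {a} := ENNReal.toReal_pos hatom (measure_ne_top ν _)
  have hlarge : ∀ᶠ x in 𝓝[≠] a,
      C + ν.real Set.univ * Real.log D < ν.real {a} * Real.log (1 / |x - a|) :=
    ((tendsto_log_one_div_abs_sub_atTop a).const_mul_atTop hmass).eventually_gt_atTop _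
  have hnear : ∀ᶠ x in 𝓝[≠] a, |x - a| ≤ 1 :=
    nhdsWithin_le_nhds (Metric.closedBall_mem_nhds a one_pos)
  obtain ⟨x, ⟨hint, hC⟩, hlarge, hnear⟩ := (hbdd.and_eventually (hlarge.and hnear)).exists
  have hdist : ∀ᵐ y ∂ν, |x - y| ≤ D := by
    filter_upwards [hsupp] with y hy
    linarith [abs_sub_le x a y, le_abs_self R]
  have hlower := measureReal_singleton_mul_log_sub_le_logPot (a := a)
    (le_add_of_nonneg_left (abs_nonneg R)) hdist hint
  linarith

theorem measure_singleton_left_eq_zero_of_monotoneOn_logPot [IsFiniteMeasure ν] (hab : a < b)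
    (hsupp : ∀ᵐ y ∂ν, y ∈ Set.Icc a b)
    (hint : ∀ x ∈ Set.Icc a b, Integrable (fun y => Real.log (1 / |x - y|)) ν)
    (hmono : MonotoneOn (logPot ν) (Set.Icc a b)) :
    ν {a} = 0 := by
  have hdist : ∀ᵐ y ∂ν, |a - y| ≤ b - a := by
    filter_upwards [hsupp] with y hy
    rw [abs_sub_comm, abs_of_nonneg (sub_nonneg.2 hy.1)]
    exact sub_le_sub_right hy.2 a
  have hbdd : ∀ᶠ x in 𝓝[>] a,
      Integrable (fun y => Real.log (1 / |x - y|)) ν ∧ logPot ν x ≤ logPot ν b := by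
    filter_upwards [Ioo_mem_nhdsGT hab] with x hx
    have hxI := Set.Ioo_subset_Icc_self hx
    exact ⟨hint x hxI, hmono hxI (Set.right_mem_Icc.2 hab.le) hx.2.le⟩
  exact measure_singleton_eq_zero_of_frequently_logPot_le hdist
    (hbdd.frequently.filter_mono (nhdsGT_le_nhdsNE a))

theorem antitoneOn_logPot_map_neg [IsFiniteMeasure ν] (ha : 0 < a)
    (hsupp : ∀ᵐ y ∂ν, y ∈ Set.Icc a b) :
    AntitoneOn (logPot (ν.map fun y => -y)) (Set.Ici 0) := by
  intro x hx z hz hxz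
  rw [logPot_map_neg, logPot_map_neg]
  exact monotoneOn_logPot_Iio hsupp ((neg_nonpos.2 hz).trans_lt ha)
    ((neg_nonpos.2 hx).trans_lt ha) (neg_le_neg hxz)

end LogPotential

theorem symmetric_angelesco_potential_bound_general
    {a b c ℓ : ℝ} (ha : 0 < a) (hab : a < b) (hc : 0 < c)
    {ν : Measure ℝ} [IsFiniteMeasure ν] [NeZero ν] (hsupp : ν (Set.Icc a b)ᶜ = 0)
    (hint : ∀ x ∈ Set.Icc a b, Integrable (fun y => Real.log (1 / |x - y|)) ν)
    (heq : ∀ x ∈ Set.Icc a b, logPot (ν.map fun y => -y) x + c * logPot ν x = ℓ) :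
    (∀ x ∈ Set.Icc a b, logPot (ν.map fun y => -y) x - logPot ν x ≤
      logPot (ν.map fun y => -y) a - logPot ν a) ∧
    logPot (ν.map fun y => -y) a - logPot ν a < 0 := by
  have hae : ∀ᵐ y ∂ν, y ∈ Set.Icc a b := mem_ae_iff.2 hsupp
  have haI : a ∈ Set.Icc a b := Set.left_mem_Icc.2 hab.le
  have hanti : AntitoneOn (logPot (ν.map fun y => -y)) (Set.Icc a b) :=
    (antitoneOn_logPot_map_neg ha hae).mono fun x hx => ha.le.trans hx.1
  have hmono : MonotoneOn (logPot ν) (Set.Icc a b) :=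
    monotoneOn_of_antitoneOn_of_add_mul_eq hc hanti heq
  refine ⟨fun x hx => sub_le_sub (hanti haI hx hx.1) (hmono haI hx hx.1), sub_neg.2 ?_⟩
  rw [logPot_map_neg]
  exact logPot_neg_lt_logPot (integrable_log_one_div_abs_sub_of_lt hae (by linarith)) (hint a haI)
    ha (hae.mono fun y hy => ha.trans_le hy.1)
    (measure_singleton_left_eq_zero_of_monotoneOn_logPot hab hae hint hmono)

/-- **Exponential smallness of `2U(·;ν₁) + U(·;ν₂) − ℓ` on the second interval in the
symmetric case.**  Let `0 < a < b`, let `ν₂` be a probability measure supported in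
`[a,b]`, let `ν₁` be its reflection, and suppose the equilibrium condition
`U(x;ν₁) + 2U(x;ν₂) = ℓ` holds on `[a,b]` (with both potentials finite there).  Then
`2U(x;ν₁) + U(x;ν₂) − ℓ ≤ U(a;ν₁) − U(a;ν₂) < 0` for all `x ∈ [a,b]`. -/
theorem symmetric_angelesco_potential_bound
    (a b : ℝ) (ha : 0 < a) (hab : a < b)
    (ν₂ : Measure ℝ) [IsProbabilityMeasure ν₂] (hsupp : ν₂ (Set.Icc a b)ᶜ = 0)
    (ν₁ : Measure ℝ) (hrefl : ν₁ = ν₂.map (fun y => -y))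
    (hint : ∀ x ∈ Set.Icc a b,
      Integrable (fun y => Real.log (1 / |x - y|)) ν₁ ∧
      Integrable (fun y => Real.log (1 / |x - y|)) ν₂)
    (ℓ : ℝ) (heq : ∀ x ∈ Set.Icc a b, logPot ν₁ x + 2 * logPot ν₂ x = ℓ) :
    (∀ x ∈ Set.Icc a b,
      2 * logPot ν₁ x + logPot ν₂ x - ℓ ≤ logPot ν₁ a - logPot ν₂ a) ∧
    logPot ν₁ a - logPot ν₂ a < 0 := by
  subst hrefl
  obtain ⟨hle, hneg⟩ := symmetric_angelesco_potential_bound_general ha hab two_pos hsupp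
    (fun x hx => (hint x hx).2) heq
  exact ⟨fun x hx => by linarith [hle x hx, heq x hx], hneg⟩
end

section
/- Let D be a closed disc in ℂ whose interior contains the segment [a₁,b₂] of the real axis, let Γ be its boundary circle, and let f be a complex-differentiable function on an open set containing D. Suppose that sup_{z ∈ Γ} | ∑_{j=1}^{2n} λ_{j,2n}^{(1)} / (z − x_{j,2n}) − ∫ (z − x)^{−1} dμ₁(x) | → 0 as n → ∞. Then the first quadrature rule converges for f: lim_{n→∞} ∑_{j=1}^{2n} λ_{j,2n}^{(1)} f(x_{j,2n}) = ∫ f(x) dμ₁(x). -/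
open MeasureTheory

/-!
By Cauchy's formula, integrating `f` over the circle `Γ` against the Cauchy kernel `(z - x)⁻¹`
recovers `2πi f(x)` for every `x` inside `Γ`. By linearity for a quadrature rule, and by Fubini for
a measure supported away from `Γ`, both `∑ λⱼ f(xⱼ)` and `∫ f dμ₁` are therefore `(2πi)⁻¹` times the
integral over `Γ` of `f` against a Cauchy transform, and uniform convergence of the Cauchy
transforms on `Γ` passes to these contour integrals.
-/

open Filter Metric Topology

theorem sub_le_dist_of_mem_sphere_of_mem_ball {X : Type*} [PseudoMetricSpace X] {c z w : X}
    {r ρ : ℝ} (hz : z ∈ sphere c r) (hw : w ∈ ball c ρ) : r - ρ ≤ dist z w := by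
  linarith [mem_sphere.1 hz, mem_ball.1 hw, dist_triangle z w c]

theorem continuousOn_sum_div_sub {𝕜 κ : Type*} [NormedField 𝕜] (s : Finset κ) (w : κ → 𝕜)
    {x : κ → 𝕜} {S : Set 𝕜} (hx : ∀ j ∈ s, x j ∉ S) :
    ContinuousOn (fun z ↦ ∑ j ∈ s, w j / (z - x j)) S :=
  continuousOn_finsetSum s fun j hj ↦ continuousOn_const.div (by fun_prop) fun _ hz ↦
    sub_ne_zero.2 (ne_of_mem_of_not_mem hz (hx j hj))

section CauchyKernel

variable {E : Type*} [NormedAddCommGroup E] [NormedSpace ℂ E] {c : ℂ} {r ρ : ℝ} {f : ℂ → E}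

theorem circleIntegral_sum_div_sub_smul [CompleteSpace E] {κ : Type*} (hr : 0 ≤ r)
    (hf : DiffContOnCl ℂ f (ball c r)) (s : Finset κ) (w : κ → ℂ) {x : κ → ℂ}
    (hx : ∀ j ∈ s, x j ∈ ball c r) :
    ∮ z in C(c, r), (∑ j ∈ s, w j / (z - x j)) • f z =
      (2 * Real.pi * Complex.I : ℂ) • ∑ j ∈ s, w j • f (x j) := by
  have hfc : ContinuousOn f (sphere c r) := hf.continuousOn_ball.mono sphere_subset_closedBall
  have hint : ∀ j ∈ s, CircleIntegrable (fun z ↦ w j • (z - x j)⁻¹ • f z) c r := fun j hj ↦ by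
    refine ((ContinuousOn.inv₀ (by fun_prop) fun z hz ↦ ?_).smul hfc).const_smul (w j)
      |>.circleIntegrable hr
    exact sub_ne_zero.2 (ne_of_mem_of_not_mem hz
      (Set.disjoint_right.1 sphere_disjoint_ball (hx j hj)))
  calc ∮ z in C(c, r), (∑ j ∈ s, w j / (z - x j)) • f z
      = ∮ z in C(c, r), ∑ j ∈ s, w j • (z - x j)⁻¹ • f z := by
        simp only [div_eq_mul_inv, Finset.sum_smul, mul_smul]
    _ = ∑ j ∈ s, w j • ∮ z in C(c, r), (z - x j)⁻¹ • f z := by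
        rw [circleIntegral.integral_fun_sum hint]
        simp only [circleIntegral.integral_smul]
    _ = ∑ j ∈ s, w j • (2 * Real.pi * Complex.I : ℂ) • f (x j) :=
        Finset.sum_congr rfl fun j hj ↦ by rw [hf.circleIntegral_sub_inv_smul (hx j hj)]
    _ = (2 * Real.pi * Complex.I : ℂ) • ∑ j ∈ s, w j • f (x j) := by
        rw [Finset.smul_sum]
        exact Finset.sum_congr rfl fun _ _ ↦ smul_comm ..

variable {α : Type*} [MeasurableSpace α] {μ : Measure α} [IsFiniteMeasure μ] {φ : α → ℂ}

theorem integrable_uncurry_deriv_circleMap_smul_sub_inv_smul (hr : 0 ≤ r) (hρ : ρ < r)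
    (hf : ContinuousOn f (sphere c r)) (hφ : AEMeasurable φ μ) (hφρ : ∀ᵐ x ∂μ, φ x ∈ ball c ρ) :
    Integrable (Function.uncurry fun (θ : ℝ) (x : α) ↦
        deriv (circleMap c r) θ • (circleMap c r θ - φ x)⁻¹ • f (circleMap c r θ))
      ((volume.restrict (Set.uIoc 0 (2 * Real.pi))).prod μ) := by
  have hcircle : ∀ θ, circleMap c r θ ∈ sphere c r := circleMap_mem_sphere c hr
  obtain ⟨M, hM⟩ := (isCompact_sphere c r).exists_bound_of_continuousOn hf
  have hfcircle : Continuous fun θ ↦ f (circleMap c r θ) :=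
    hf.comp_continuous (continuous_circleMap c r) hcircle
  have hderiv : Continuous (deriv (circleMap c r)) := by
    simp only [funext (deriv_circleMap c r)]
    fun_prop
  have hkernel : AEMeasurable (fun p : ℝ × α ↦ (circleMap c r p.1 - φ p.2)⁻¹)
      ((volume.restrict (Set.uIoc 0 (2 * Real.pi))).prod μ) :=
    (((measurable_circleMap c r).comp measurable_fst).aemeasurable.sub hφ.comp_snd).inv
  have : IsFiniteMeasure (volume.restrict (Set.uIoc 0 (2 * Real.pi))) :=
    ⟨by simp [Set.uIoc]⟩
  refine Integrable.of_bound (C := r * ((r - ρ)⁻¹ * M)) ?_ ?_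
  · exact hderiv.aestronglyMeasurable.comp_fst.smul
      (hkernel.aestronglyMeasurable.smul hfcircle.aestronglyMeasurable.comp_fst)
  · filter_upwards [Measure.quasiMeasurePreserving_snd.ae hφρ] with ⟨θ, x⟩ hx
    have hdist : r - ρ ≤ ‖circleMap c r θ - φ x‖ :=
      (sub_le_dist_of_mem_sphere_of_mem_ball (hcircle θ) hx).trans_eq (dist_eq_norm _ _)
    have : 0 < r - ρ := sub_pos.2 hρ
    simp only [Function.uncurry_apply_pair, deriv_circleMap, norm_smul, norm_mul, norm_inv,
      norm_circleMap_zero, Complex.norm_I, mul_one, abs_of_nonneg hr]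
    gcongr
    exact hM _ (hcircle θ)

theorem circleIntegral_integral_sub_inv_smul [CompleteSpace E] {K : Set ℂ} (hr : 0 ≤ r)
    (hf : DiffContOnCl ℂ f (ball c r)) (hφ : AEMeasurable φ μ) (hK : IsClosed K)
    (hKr : K ⊆ ball c r) (hφK : ∀ᵐ x ∂μ, φ x ∈ K) :
    ∮ z in C(c, r), (∫ x, (z - φ x)⁻¹ ∂μ) • f z =
      (2 * Real.pi * Complex.I : ℂ) • ∫ x, f (φ x) ∂μ := by
  obtain ⟨ρ, hρ, hKρ⟩ := exists_lt_subset_ball hK hKr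
  have hfc : ContinuousOn f (sphere c r) := hf.continuousOn_ball.mono sphere_subset_closedBall
  have hint := integrable_uncurry_deriv_circleMap_smul_sub_inv_smul hr hρ hfc hφ
    (hφK.mono fun _ hx ↦ hKρ hx)
  calc ∮ z in C(c, r), (∫ x, (z - φ x)⁻¹ ∂μ) • f z
      = ∫ θ in 0..2 * Real.pi, ∫ x, deriv (circleMap c r) θ •
          (circleMap c r θ - φ x)⁻¹ • f (circleMap c r θ) ∂μ := by
        simp only [circleIntegral, integral_smul, integral_smul_const]
    _ = ∫ x, (∮ z in C(c, r), (z - φ x)⁻¹ • f z) ∂μ := intervalIntegral_integral_swap hint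
    _ = ∫ x, (2 * Real.pi * Complex.I : ℂ) • f (φ x) ∂μ :=
        integral_congr_ae (hφK.mono fun _ hx ↦ hf.circleIntegral_sub_inv_smul (hKr hx))
    _ = (2 * Real.pi * Complex.I : ℂ) • ∫ x, f (φ x) ∂μ := integral_smul _ _

end CauchyKernel

theorem tendsto_circleIntegral_smul_of_tendstoUniformlyOn {E ι : Type*} [NormedAddCommGroup E]
    [NormedSpace ℂ E] {l : Filter ι} [l.IsCountablyGenerated] {c : ℂ} {r : ℝ} (hr : 0 ≤ r)
    {F : ι → ℂ → ℂ} {G : ℂ → ℂ} {f : ℂ → E} (hF : ∀ i, ContinuousOn (F i) (sphere c r))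
    (hFG : TendstoUniformlyOn F G l (sphere c r)) (hf : ContinuousOn f (sphere c r)) :
    Tendsto (fun i ↦ ∮ z in C(c, r), F i z • f z) l (𝓝 (∮ z in C(c, r), G z • f z)) := by
  obtain rfl | _ := l.eq_or_neBot
  · exact tendsto_bot
  have hG : ContinuousOn G (sphere c r) := hFG.continuousOn (Frequently.of_forall hF)
  have hf_const : TendstoUniformlyOn (fun _ : ι ↦ f) f l (sphere c r) :=
    fun _ hu ↦ .of_forall fun _ _ _ ↦ refl_mem_uniformity hu
  have hsmul : TendstoUniformlyOn (fun i z ↦ F i z • f z) (fun z ↦ G z • f z) l (sphere c r) :=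
    (tendstoLocallyUniformlyOn_iff_tendstoUniformlyOn_of_compact (isCompact_sphere c r)).1 <|
      hFG.tendstoLocallyUniformlyOn.smul₀ hf_const.tendstoLocallyUniformlyOn hG hf
  exact hsmul.tendsto_circleIntegral_of_continuousOn hr (.of_forall fun i ↦ (hF i).smul hf)

theorem Angelesco.x_mem_Icc {μ₁ μ₂ : Measure ℝ} {a₁ b₁ a₂ b₂ : ℝ} {n : ℕ}
    (ad : Angelesco μ₁ μ₂ a₁ b₁ a₂ b₂ n) (ha : a₁ ≤ a₂) (hb : b₁ ≤ b₂)
    (j : Fin (2 * n)) : ad.x j ∈ Set.Icc a₁ b₂ := by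
  obtain hj | hj := lt_or_ge (j : ℕ) n
  · exact Set.Icc_subset_Icc_right hb (Set.Ioo_subset_Icc_self (ad.mem1 j hj))
  · exact Set.Icc_subset_Icc_left ha (Set.Ioo_subset_Icc_self (ad.mem2 j hj))

theorem angelesco_quadrature_convergence_analytic_general {E ι α : Type*} [NormedAddCommGroup E]
    [NormedSpace ℂ E] [CompleteSpace E] [MeasurableSpace α] {μ : Measure α} [IsFiniteMeasure μ]
    {l : Filter ι} [l.IsCountablyGenerated] {κ : ι → Type*} [∀ i, Fintype (κ i)]
    {w x : ∀ i, κ i → ℂ} {φ : α → ℂ} {c : ℂ} {r : ℝ} {K : Set ℂ} {f : ℂ → E} (hr : 0 ≤ r)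
    (hK : IsClosed K) (hKr : K ⊆ ball c r) (hφ : AEMeasurable φ μ) (hφK : ∀ᵐ t ∂μ, φ t ∈ K)
    (hx : ∀ i j, x i j ∈ ball c r) (hf : DiffContOnCl ℂ f (ball c r))
    (hconv : TendstoUniformlyOn (fun i z ↦ ∑ j, w i j / (z - x i j))
      (fun z ↦ ∫ t, (z - φ t)⁻¹ ∂μ) l (sphere c r)) :
    Tendsto (fun i ↦ ∑ j, w i j • f (x i j)) l (𝓝 (∫ t, f (φ t) ∂μ)) := by
  have hcont : ∀ i, ContinuousOn (fun z ↦ ∑ j, w i j / (z - x i j)) (sphere c r) := fun i ↦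
    continuousOn_sum_div_sub _ _ fun j _ ↦ Set.disjoint_right.1 sphere_disjoint_ball (hx i j)
  have hlim := tendsto_circleIntegral_smul_of_tendstoUniformlyOn hr hcont hconv
    (hf.continuousOn_ball.mono sphere_subset_closedBall)
  rw [circleIntegral_integral_sub_inv_smul hr hf hφ hK hKr hφK] at hlim
  simp only [circleIntegral_sum_div_sub_smul hr hf _ _ fun j _ ↦ hx _ j] at hlim
  exact (tendsto_const_smul_iff₀ Complex.two_pi_I_ne_zero).1 hlim

/-- **Convergence of the first quadrature rule for analytic functions** (Theorem 3.4).
Let `D` be a closed disc whose interior contains the segment `[a₁,b₂]` of the real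
axis, with boundary circle `Γ`, and let `f` be complex-differentiable on an open set
containing `D`.  If the Hermite–Padé approximants
`∑_{j=1}^{2n} λ_{j,2n}^{(1)}/(z − x_{j,2n})` converge uniformly on `Γ` to the Cauchy
transform `∫ (z − x)⁻¹ dμ₁(x)`, then
`∑_{j=1}^{2n} λ_{j,2n}^{(1)} f(x_{j,2n}) → ∫ f dμ₁`. -/
theorem angelesco_quadrature_convergence_analytic
    (μ₁ μ₂ : Measure ℝ) [IsFiniteMeasure μ₁] [IsFiniteMeasure μ₂]
    (a₁ b₁ a₂ b₂ : ℝ) (hab₁ : a₁ < b₁) (hgap : b₁ ≤ a₂) (hab₂ : a₂ < b₂)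
    (hsupp₁ : μ₁ (Set.Icc a₁ b₁)ᶜ = 0) (hsupp₂ : μ₂ (Set.Icc a₂ b₂)ᶜ = 0)
    (hinf₁ : ∀ s : Finset ℝ, μ₁ ((s : Set ℝ))ᶜ ≠ 0)
    (hinf₂ : ∀ s : Finset ℝ, μ₂ ((s : Set ℝ))ᶜ ≠ 0)
    (hmom₁ : ∀ k : ℕ, Integrable (fun t : ℝ => t ^ k) μ₁)
    (hmom₂ : ∀ k : ℕ, Integrable (fun t : ℝ => t ^ k) μ₂)
    (ad : ∀ n : ℕ, Angelesco μ₁ μ₂ a₁ b₁ a₂ b₂ n)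
    (z₀ : ℂ) (r : ℝ) (hr : 0 < r)
    (hseg : (fun x : ℝ => (x : ℂ)) '' Set.Icc a₁ b₂ ⊆ Metric.ball z₀ r)
    (f : ℂ → ℂ)
    (hf : ∃ U : Set ℂ, IsOpen U ∧ Metric.closedBall z₀ r ⊆ U ∧ DifferentiableOn ℂ f U)
    (hconv : ∀ ε > (0 : ℝ), ∃ N : ℕ, ∀ n ≥ N, ∀ z ∈ Metric.sphere z₀ r,
      ‖(∑ j : Fin (2 * n), (qweight (ad n) μ₁ j : ℂ) / (z - ((ad n).x j : ℂ))) -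
        ∫ x, (z - (x : ℂ))⁻¹ ∂μ₁‖ ≤ ε) :
    Filter.Tendsto
      (fun n : ℕ => ∑ j : Fin (2 * n), (qweight (ad n) μ₁ j : ℂ) * f (((ad n).x j : ℂ)))
      Filter.atTop (nhds (∫ x, f (x : ℂ) ∂μ₁)) := by
  obtain ⟨U, -, hDU, hfU⟩ := hf
  have ha : a₁ ≤ a₂ := hab₁.le.trans hgap
  have hb : b₁ ≤ b₂ := hgap.trans hab₂.le
  have hsupp : ∀ᵐ x ∂μ₁, x ∈ Set.Icc a₁ b₁ := hsupp₁
  have hunif : TendstoUniformlyOn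
      (fun n z ↦ ∑ j, (qweight (ad n) μ₁ j : ℂ) / (z - ((ad n).x j : ℂ)))
      (fun z ↦ ∫ x, (z - (x : ℂ))⁻¹ ∂μ₁) atTop (sphere z₀ r) := by
    simpa only [uniformity_basis_dist_le.tendstoUniformlyOn_iff_of_uniformity, eventually_atTop,
      dist_eq_norm', Set.mem_ofPred_eq] using hconv
  exact angelesco_quadrature_convergence_analytic_general hr.le
    (isCompact_Icc.image Complex.continuous_ofReal).isClosed hseg
    Complex.measurable_ofReal.aemeasurable
    (hsupp.mono fun _ hx ↦ Set.mem_image_of_mem _ (Set.Icc_subset_Icc_right hb hx))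
    (fun n j ↦ hseg (Set.mem_image_of_mem _ ((ad n).x_mem_Icc ha hb j)))
    ((hfU.mono hDU).mono closure_ball_subset_closedBall).diffContOnCl hunif
end
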